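/- arXiv:2209.06142 — 4 statements merged into one kernel-verified Lean document; each statement's English description precedes it below -/
import Mathlib

section
/- For every permutation σ of [n], the number of linear extensions of the permutation poset P_σ times the number of linear extensions of P_{σ̄} is at least n!, where σ̄(i) = σ(n+1−i). -/
/-!
Write a linear extension of `P` as the word listing its elements in increasing order, and let the
promotion path of a word be the chain of `P` found greedily from its first letter. Sliding `x`
backwards through a word of `P - x` gives a word of `P` whose promotion path contains `x`, and the
slide can be undone; hence at least `e(P - x)` words of `P` have `x` on their promotion path.

If no two elements are comparable both in `P` and in `Q`, a promotion path of `P` and one of `Q`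
share at most one element. Counting the triples of a word of `P`, a word of `Q` and a common element
of their promotion paths gives `∑ x, e(P - x) * e(Q - x) ≤ e(P) * e(Q)`, and `n!` follows by
induction. For permutation posets, reversing the positions of `σ̄` turns `P_σ̄` into the
order whose comparable pairs are the inversions of `σ`, and these are incomparable in `P_σ`.
-/

namespace SidorenkoInequality

open Finset Nat

variable {α β : Type*} {r : α → α → Prop}

section Slide

variable [DecidableRel r]

/-- The backward slide of the letter `x` through the word `l`, that is, inverse promotion: the
carried letter, at first `x`, moves to the left past the letters incomparable to it, and is dropped
and exchanged for the first letter below it. The resulting word is returned as its head and tail. -/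
def slide (r : α → α → Prop) [DecidableRel r] (x : α) : List α → α × List α
  | [] => (x, [])
  | w :: l =>
    let (y, t) := slide r x l
    if r w y then (w, y :: t) else (y, w :: t)

/-- The inverse of `slide`: removes `x` from the word `c :: l` and shifts the letters of the
promotion path below `x` back to the right. -/
def unslide [DecidableEq α] (r : α → α → Prop) [DecidableRel r] (x : α) : α → List α → List α
  | _, [] => []
  | c, z :: l =>
    if c = x then z :: l
    else if r c z then c :: unslide r x z l
    else z :: unslide r x c l

/-- A word respects `r` if no letter is `r`-below an earlier one. -/
def Respects (r : α → α → Prop) (l : List α) : Prop :=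
  l.Pairwise fun a b => ¬ r b a

theorem slide_cons_of_rel {x w : α} {l : List α} (h : r w (slide r x l).1) :
    slide r x (w :: l) = (w, (slide r x l).1 :: (slide r x l).2) :=
  if_pos h

theorem slide_cons_of_not_rel {x w : α} {l : List α} (h : ¬ r w (slide r x l).1) :
    slide r x (w :: l) = ((slide r x l).1, w :: (slide r x l).2) :=
  if_neg h

theorem slide_perm (x : α) (l : List α) : ((slide r x l).1 :: (slide r x l).2).Perm (x :: l) := by
  induction l with
  | nil => exact .refl _
  | cons w l ih =>
    have cons_perm : (w :: (slide r x l).1 :: (slide r x l).2).Perm (x :: w :: l) :=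
      (ih.cons w).trans (.swap _ _ _)
    by_cases h : r w (slide r x l).1
    · rwa [slide_cons_of_rel h]
    · rw [slide_cons_of_not_rel h]
      exact (List.Perm.swap _ _ _).trans cons_perm

theorem slide_eq_or [IsTrans α r] (x : α) (l : List α) :
    slide r x l = (x, l) ∨ (slide r x l).1 ∈ l ∧ r (slide r x l).1 x := by
  induction l with
  | nil => exact .inl rfl
  | cons w l ih =>
    by_cases h : r w (slide r x l).1
    · rw [slide_cons_of_rel h]
      refine .inr ⟨List.mem_cons_self, ?_⟩
      rcases ih with heq | ⟨-, hlt⟩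
      · rwa [heq] at h
      · exact _root_.trans h hlt
    · rw [slide_cons_of_not_rel h]
      rcases ih with heq | ⟨hmem, hlt⟩
      · exact .inl (by rw [heq])
      · exact .inr ⟨List.mem_cons_of_mem w hmem, hlt⟩

theorem respects_slide [IsStrictOrder α r] {l : List α} (hl : Respects r l) (x : α) :
    Respects r ((slide r x l).1 :: (slide r x l).2) := by
  induction l with
  | nil => exact List.pairwise_singleton _ _
  | cons w l ih =>
    obtain ⟨hw, hl⟩ := List.pairwise_cons.1 hl
    obtain ⟨hhead, htail⟩ := List.pairwise_cons.1 (ih hl)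
    by_cases h : r w (slide r x l).1
    · rw [slide_cons_of_rel h]
      refine List.pairwise_cons.2 ⟨fun b hb hbw => ?_, ih hl⟩
      rcases List.mem_cons.1 hb with rfl | hb
      · exact asymm h hbw
      · exact hhead b hb (_root_.trans hbw h)
    · rw [slide_cons_of_not_rel h]
      refine List.pairwise_cons.2
        ⟨List.forall_mem_cons.2 ⟨h, hhead⟩, List.pairwise_cons.2 ⟨fun b hb hbw => ?_, htail⟩⟩
      rcases slide_eq_or (r := r) x l with heq | ⟨hmem, hlt⟩
      · rw [heq] at hb
        exact hw b hb hbw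
      · rcases List.mem_cons.1 ((slide_perm x l).subset (List.mem_cons_of_mem _ hb)) with rfl | hb
        · exact hw _ hmem (_root_.trans hlt hbw)
        · exact hw b hb hbw

theorem unslide_self [DecidableEq α] (x : α) (l : List α) : unslide r x x l = l := by
  cases l with
  | nil => rfl
  | cons z l => exact if_pos rfl

theorem unslide_slide [DecidableEq α] [IsTrans α r] {x : α} {l : List α} (hl : Respects r l)
    (hx : x ∉ l) : unslide r x (slide r x l).1 (slide r x l).2 = l := by
  induction l with
  | nil => rfl
  | cons w l ih =>
    obtain ⟨hw, hl⟩ := List.pairwise_cons.1 hl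
    obtain ⟨hwx, hxl⟩ := not_or.1 (mt List.mem_cons.2 hx)
    by_cases h : r w (slide r x l).1
    · rw [slide_cons_of_rel h, unslide, if_neg (Ne.symm hwx), if_pos h, ih hl hxl]
    · rw [slide_cons_of_not_rel h]
      rcases slide_eq_or (r := r) x l with heq | ⟨hmem, -⟩
      · rw [heq, unslide_self]
      · rw [unslide, if_neg (ne_of_mem_of_not_mem hmem hxl), if_neg (hw _ hmem), ih hl hxl]

-- `destutter` keeps a letter when it is `r`-above the last one kept, so it computes the promotion
-- path.
theorem mem_destutter_slide [IsTrans α r] (x : α) {l : List α} (hl : Respects r l) :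
    x ∈ ((slide r x l).1 :: (slide r x l).2).destutter r := by
  rw [List.destutter_cons']
  induction l with
  | nil => exact List.mem_singleton_self x
  | cons w l ih =>
    obtain ⟨hw, hl⟩ := List.pairwise_cons.1 hl
    by_cases h : r w (slide r x l).1
    · rw [slide_cons_of_rel h, List.destutter'_cons_pos _ h]
      exact List.mem_cons_of_mem w (ih hl)
    · rw [slide_cons_of_not_rel h]
      rcases slide_eq_or (r := r) x l with heq | ⟨hmem, -⟩
      · rw [heq]
        exact List.mem_destutter' _ r x
      · rw [List.destutter'_cons_neg _ (hw _ hmem)]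
        exact ih hl

theorem eq_or_rel_of_mem_destutter [IsTrans α r] {l : List α} {x y : α}
    (hx : x ∈ l.destutter r) (hy : y ∈ l.destutter r) : x = y ∨ r x y ∨ r y x := by
  have hchain : (l.destutter r).Pairwise (Relation.SymmGen r) :=
    (List.isChain_iff_pairwise.1 (l.isChain_destutter r)).imp .inl
  exact or_iff_not_imp_left.2 (hchain.forall hx hy)

theorem card_common_destutter_le_one [DecidableEq α] [IsTrans α r] {q : α → α → Prop}
    [DecidableRel q] [IsTrans α q] (s : Finset α) (hrq : ∀ a b, r a b → ¬ q a b ∧ ¬ q b a)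
    (l m : List α) :
    #{x ∈ s | x ∈ l.destutter r ∧ x ∈ m.destutter q} ≤ 1 := by
  refine card_le_one.2 fun x hx y hy => ?_
  obtain ⟨-, hxl, hxm⟩ := mem_filter.1 hx
  obtain ⟨-, hyl, hym⟩ := mem_filter.1 hy
  by_contra hne
  have hq : q x y ∨ q y x := (eq_or_rel_of_mem_destutter hxm hym).resolve_left hne
  rcases (eq_or_rel_of_mem_destutter hxl hyl).resolve_left hne with hxy | hyx
  · exact hq.elim (hrq x y hxy).1 (hrq x y hxy).2
  · exact hq.elim (hrq y x hyx).2 (hrq y x hyx).1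

end Slide

section Words

variable [DecidableEq α] {s : Finset α}

open scoped Classical in
/-- The linear extensions of the restriction of `r` to `s`, each encoded as the word listing the
elements of `s` in increasing order. -/
noncomputable def words (r : α → α → Prop) (s : Finset α) : Finset (List α) :=
  {l ∈ s.val.lists.toFinset | Respects r l}

theorem mem_words {l : List α} : l ∈ words r s ↔ s.val = l ∧ Respects r l := by
  simp [words, Multiset.mem_lists_iff]

theorem mem_iff_of_mem_words {l : List α} (hl : l ∈ words r s) {x : α} : x ∈ l ↔ x ∈ s := by
  rw [← mem_val, (mem_words.1 hl).1, Multiset.mem_coe]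

theorem nil_mem_words_empty : [] ∈ words r ∅ :=
  mem_words.2 ⟨rfl, .nil⟩

variable [IsStrictOrder α r]

theorem slide_mem_words [DecidableRel r] {x : α} (hx : x ∈ s) {l : List α}
    (hl : l ∈ words r (s.erase x)) :
    (slide r x l).1 :: (slide r x l).2 ∈ words r s := by
  obtain ⟨hval, hresp⟩ := mem_words.1 hl
  refine mem_words.2 ⟨?_, respects_slide hresp x⟩
  rw [Multiset.coe_eq_coe.2 (slide_perm x l), ← Multiset.cons_coe, ← hval, erase_val,
    Multiset.cons_erase hx]

theorem card_words_erase_le [DecidableRel r] {x : α} (hx : x ∈ s) :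
    #(words r (s.erase x)) ≤ #{l ∈ words r s | x ∈ l.destutter r} := by
  refine card_le_card_of_injOn (fun l => (slide r x l).1 :: (slide r x l).2)
    (fun l hl => ?_) fun l hl m hm hlm => ?_
  · exact mem_filter.2 ⟨slide_mem_words hx hl, mem_destutter_slide x (mem_words.1 hl).2⟩
  · have unslide_word {k : List α} (hk : k ∈ words r (s.erase x)) :
        unslide r x (slide r x k).1 (slide r x k).2 = k :=
      unslide_slide (mem_words.1 hk).2
        fun hxk => notMem_erase x s ((mem_iff_of_mem_words hk).1 hxk)
    obtain ⟨hhead, htail⟩ := List.cons.inj hlm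
    rw [← unslide_word hl, hhead, htail, unslide_word hm]

variable {q : α → α → Prop} [IsStrictOrder α q]

theorem sum_card_words_erase_mul_le (hrq : ∀ a b, r a b → ¬ q a b ∧ ¬ q b a) :
    ∑ x ∈ s, #(words r (s.erase x)) * #(words q (s.erase x)) ≤ #(words r s) * #(words q s) := by
  classical
  calc ∑ x ∈ s, #(words r (s.erase x)) * #(words q (s.erase x))
    _ ≤ ∑ x ∈ s, #{p ∈ words r s ×ˢ words q s | x ∈ p.1.destutter r ∧ x ∈ p.2.destutter q} := by
      refine sum_le_sum fun x hx => ?_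
      refine (Nat.mul_le_mul (card_words_erase_le hx) (card_words_erase_le hx)).trans_eq ?_
      rw [← card_product, ← filter_product]
    _ = ∑ p ∈ words r s ×ˢ words q s, #{x ∈ s | x ∈ p.1.destutter r ∧ x ∈ p.2.destutter q} :=
      sum_card_bipartiteAbove_eq_sum_card_bipartiteBelow _
    _ ≤ ∑ _p ∈ words r s ×ˢ words q s, 1 :=
      sum_le_sum fun p _ => card_common_destutter_le_one s hrq p.1 p.2
    _ = #(words r s) * #(words q s) := by rw [← card_eq_sum_ones, card_product]

theorem factorial_card_le_card_words_mul (hrq : ∀ a b, r a b → ¬ q a b ∧ ¬ q b a)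
    (s : Finset α) : (#s)! ≤ #(words r s) * #(words q s) := by
  induction hs : #s generalizing s with
  | zero =>
    obtain rfl := card_eq_zero.1 hs
    exact Nat.mul_pos (card_pos.2 ⟨_, nil_mem_words_empty⟩) (card_pos.2 ⟨_, nil_mem_words_empty⟩)
  | succ n ih =>
    calc (n + 1)! = ∑ _x ∈ s, n ! := by rw [sum_const, hs, smul_eq_mul, factorial_succ]
      _ ≤ ∑ x ∈ s, #(words r (s.erase x)) * #(words q (s.erase x)) :=
        sum_le_sum fun x hx => ih (s.erase x) <| by
          rw [card_erase_of_mem hx, hs, add_tsub_cancel_right]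
      _ ≤ #(words r s) * #(words q s) := sum_card_words_erase_mul_le hrq

end Words

/-- The natural labelings of `(α, r)`: the linear extensions encoded as order-preserving bijections
onto `Fin n`, where `n` has to be the size of `α`. -/
abbrev NaturalLabeling (r : α → α → Prop) (n : ℕ) : Type _ :=
  {ρ : α ≃ Fin n // ∀ i j, r i j → ρ i < ρ j}

theorem card_naturalLabeling_congr {q : β → β → Prop} (e : r ≃r q) (n : ℕ) :
    Nat.card (NaturalLabeling r n) = Nat.card (NaturalLabeling q n) :=
  Nat.card_congr <| (e.toEquiv.equivCongr (Equiv.refl (Fin n))).subtypeEquiv fun ρ =>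
    e.toEquiv.forall₂_congr e.toEquiv <| by
      simp only [Equiv.equivCongr_apply_apply, Equiv.symm_apply_apply, Equiv.refl_apply]
      exact imp_congr_left e.map_rel_iff.symm

theorem exists_naturalLabeling_ofFn_symm_eq [Fintype α] [DecidableEq α] [Std.Irrefl r] {l : List α}
    (hl : l ∈ words r univ) {n : ℕ} (hn : Nat.card α = n) :
    ∃ ρ : NaturalLabeling r n, List.ofFn ρ.1.symm = l := by
  obtain ⟨hval, hresp⟩ := mem_words.1 hl
  obtain rfl : l.length = n := by
    rw [← hn, Nat.card_eq_fintype_card, Fintype.card, card_def, hval, Multiset.coe_card]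
  have hnodup : l.Nodup := Multiset.coe_nodup.1 (hval ▸ univ.nodup)
  let e := hnodup.getEquivOfForallMemList l fun x => (mem_iff_of_mem_words hl).2 (mem_univ x)
  refine ⟨⟨e.symm, fun i j hij => ?_⟩, List.ofFn_get l⟩
  obtain ⟨a, rfl⟩ := e.surjective i
  obtain ⟨b, rfl⟩ := e.surjective j
  rw [e.symm_apply_apply, e.symm_apply_apply]
  refine lt_of_le_of_ne (not_lt.1 fun hba => ?_) fun hab => ?_
  · exact List.pairwise_iff_get.1 hresp b a hba hij
  · exact irrefl _ (hab ▸ hij)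

theorem card_words_univ_le [Fintype α] [DecidableEq α] [Std.Irrefl r] {n : ℕ}
    (hn : Nat.card α = n) : #(words r univ) ≤ Nat.card (NaturalLabeling r n) := by
  choose ρ hρ using fun l : words r univ => exists_naturalLabeling_ofFn_symm_eq l.2 hn
  have hinj : Function.Injective ρ := fun l m hlm => Subtype.ext <| by rw [← hρ l, hlm, hρ m]
  simpa using Nat.card_le_card_of_injective ρ hinj

/-- The order of the permutation poset `P_σ`. -/
def PermRel {n : ℕ} (σ : Equiv.Perm (Fin n)) (i j : Fin n) : Prop :=
  i < j ∧ σ i < σ j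

instance {n : ℕ} (σ : Equiv.Perm (Fin n)) : IsStrictOrder (Fin n) (PermRel σ) where
  irrefl _ h := lt_irrefl _ h.1
  trans _ _ _ h h' := ⟨h.1.trans h'.1, h.2.trans h'.2⟩

/-- The order dual to `PermRel σ` in the positions only, so that the comparable pairs are the
inversions of `σ`. -/
def InversionRel {n : ℕ} (σ : Equiv.Perm (Fin n)) (i j : Fin n) : Prop :=
  j < i ∧ σ i < σ j

instance {n : ℕ} (σ : Equiv.Perm (Fin n)) : IsStrictOrder (Fin n) (InversionRel σ) where
  irrefl _ h := lt_irrefl _ h.1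
  trans _ _ _ h h' := ⟨h'.1.trans h.1, h.2.trans h'.2⟩

theorem not_inversionRel_of_permRel {n : ℕ} (σ : Equiv.Perm (Fin n)) (i j : Fin n)
    (h : PermRel σ i j) : ¬ InversionRel σ i j ∧ ¬ InversionRel σ j i :=
  ⟨fun h' => lt_asymm h.1 h'.1, fun h' => lt_asymm h.2 h'.2⟩

/-- Reversing the positions identifies the inversion order of `σ` with the permutation poset
`P_σ̄`. -/
def inversionRelIso {n : ℕ} (σ : Equiv.Perm (Fin n)) :
    InversionRel σ ≃r PermRel (Fin.revPerm.trans σ) where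
  toEquiv := Fin.revPerm
  map_rel_iff' := by simp [InversionRel, PermRel]

end SidorenkoInequality

open SidorenkoInequality

theorem sidorenko_permutation_posets_general {α : Type*} [Finite α] {r q : α → α → Prop}
    [IsStrictOrder α r] [IsStrictOrder α q] (hrq : ∀ a b, r a b → ¬ q a b ∧ ¬ q b a)
    {n : ℕ} (hn : Nat.card α = n) :
    n.factorial ≤ Nat.card (NaturalLabeling r n) * Nat.card (NaturalLabeling q n) := by
  classical
  have := Fintype.ofFinite α
  calc n.factorial = (Finset.univ : Finset α).card.factorial := by
        rw [← hn, Nat.card_eq_fintype_card, Finset.card_univ]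
    _ ≤ (words r Finset.univ).card * (words q Finset.univ).card :=
      factorial_card_le_card_words_mul hrq Finset.univ
    _ ≤ Nat.card (NaturalLabeling r n) * Nat.card (NaturalLabeling q n) :=
      Nat.mul_le_mul (card_words_univ_le hn) (card_words_univ_le hn)

/-- Sidorenko's inequality for permutation posets: for a permutation `σ` of `[n]`,
`e(P_σ) * e(P_σ̄) ≥ n!`, where the permutation poset `P_σ` has `i ≺ j` iff
`i < j` and `σ(i) < σ(j)`, and `σ̄(i) = σ(n+1-i)` (here `σ̄ i = σ i.rev` in
0-based indexing). Linear extensions are encoded as bijections `ρ : Fin n ≃ Fin n`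
that are strictly increasing on the partial order. -/
theorem sidorenko_permutation_posets (n : ℕ) (σ : Equiv.Perm (Fin n)) :
    Nat.factorial n ≤
      Nat.card {ρ : Fin n ≃ Fin n // ∀ i j : Fin n, i < j → σ i < σ j → ρ i < ρ j} *
      Nat.card {ρ : Fin n ≃ Fin n // ∀ i j : Fin n, i < j → σ i.rev < σ j.rev → ρ i < ρ j} := by
  simpa only [card_naturalLabeling_congr (inversionRelIso σ), NaturalLabeling, PermRel, and_imp,
    Equiv.trans_apply, Fin.revPerm_apply] using
    sidorenko_permutation_posets_general (not_inversionRel_of_permRel σ) (Nat.card_fin n)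
end

section
/- For every finite poset P on n elements, every element x, and every k with 1 < k < n, the counts N(k) of linear extensions ρ with ρ(x) = k satisfy N(k)^2 ≥ N(k−1)·N(k+1). -/
/-!
Put `z = x` and `S = X \ {z}`. A linear extension in which `a` elements precede `z` is built by
removing elements of `S` one at a time, from below `a` times and from above for the rest, in any
prescribed order of the two sides. The number of linear extensions thus becomes a *mixed count*,
multilinear and symmetric in one labelling (below or above) per removal, and log-concavity becomes
an inequality of Alexandrov–Fenchel type: the symmetric form in the first two labellings is
Lorentzian.

The Lorentzian property is proved by induction on the number of removals. Reading one removal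
`i` first expresses the form `M` at `S` through the forms at the sets `S.erase x`; since these are
Lorentzian, testing them against the constant labelling yields the Bochner-type inequality
`⟨v, M v⟩ ≤ ∑ i, (M v)ᵢ² / (M 1)ᵢ`. It forces every positive eigenvalue of `M` relative to
`diag (M 1)` to be at least `1`, hence equal to `1`, and its eigenvectors to be constant along the
nonzero entries of `M`. When the support of `M` is connected, `M` therefore has a single positive
eigenvalue. Connectivity holds for positive weights, and the weights needed for linear extensions
are limits of positive ones.
-/

/-! ### Lorentzian matrices -/

section Lorentzian

open Matrix

theorem inner_apply_self_nonpos_of_forall_inner_eigenvector {E : Type*} [NormedAddCommGroup E]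
    [InnerProductSpace ℝ E] [FiniteDimensional ℝ E] {T : E →ₗ[ℝ] E} (hT : T.IsSymmetric) {v : E}
    (hv : ∀ μ : ℝ, 0 < μ → ∀ x, T x = μ • x → inner ℝ x v = 0) : inner ℝ (T v) v ≤ 0 := by
  set b := hT.eigenvectorBasis rfl
  rw [← b.sum_inner_mul_inner]
  refine Finset.sum_nonpos fun i _ => ?_
  have hb : T (b i) = hT.eigenvalues rfl i • b i := hT.apply_eigenvectorBasis rfl i
  rw [hT v (b i), hb, inner_smul_right, real_inner_comm, mul_assoc]
  rcases le_or_gt (hT.eigenvalues rfl i) 0 with hμ | hμ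
  · exact mul_nonpos_of_nonpos_of_nonneg hμ (mul_self_nonneg _)
  · simp [hv _ hμ _ hb]

theorem bilinForm_mul_le_sq {K V : Type*} [Field K] [LinearOrder K] [IsStrictOrderedRing K]
    [AddCommGroup V] [Module K V] {B : LinearMap.BilinForm K V} (hB : B.IsSymm) {e : V}
    (he : ∀ u, B u e = 0 → B u u ≤ 0) (v : V) {w : V} (hw : 0 ≤ B w w) :
    B v v * B w w ≤ B v w ^ 2 := by
  rcases hw.eq_or_lt with hw0 | hw0
  · rw [← hw0, mul_zero]; positivity
  have hwe : B w e ≠ 0 := fun h => (he w h).not_gt hw0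
  have hvw : B w v = B v w := hB.eq w v
  have hu := he (B w e • v - B v e • w) (by simp [mul_comm])
  simp only [map_sub, map_smul, LinearMap.sub_apply, LinearMap.smul_apply, smul_eq_mul, hvw] at hu
  refine le_of_mul_le_mul_left ?_ (by positivity : 0 < B w e ^ 2)
  nlinarith [mul_nonneg hw0.le (neg_nonneg.2 hu), sq_nonneg (B v e * B w w - B w e * B v w)]

variable {ι : Type*} [Fintype ι]

/-- The matrix form of the Alexandrov–Fenchel inequality: a reverse Cauchy–Schwarz inequality,
which for symmetric `M` says that `M` has at most one positive eigenvalue as soon as its form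
is positive at some nonnegative vector. -/
def IsLorentzian (M : Matrix ι ι ℝ) : Prop :=
  ∀ v w, 0 ≤ w → (v ⬝ᵥ M *ᵥ v) * (w ⬝ᵥ M *ᵥ w) ≤ (v ⬝ᵥ M *ᵥ w) ^ 2

theorem diagonal_mul_mul_mulVec [DecidableEq ι] (M : Matrix ι ι ℝ) (h w : ι → ℝ) :
    (diagonal h * M * diagonal h) *ᵥ w = h * M *ᵥ (h * w) := by
  have hdiag : ∀ u, diagonal h *ᵥ u = h * u := fun u => funext fun i => mulVec_diagonal h u i
  rw [← mulVec_mulVec, ← mulVec_mulVec, hdiag, hdiag]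

theorem dotProduct_diagonal_mul_mul_mulVec [DecidableEq ι] (M : Matrix ι ι ℝ) (h v w : ι → ℝ) :
    v ⬝ᵥ (diagonal h * M * diagonal h) *ᵥ w = (h * v) ⬝ᵥ M *ᵥ (h * w) := by
  rw [diagonal_mul_mul_mulVec]
  exact Finset.sum_congr rfl fun i _ => by simp only [Pi.mul_apply]; ring

theorem dotProduct_mulVec_self_nonpos_of_forall_eigenvector {M : Matrix ι ι ℝ}
    (hM : M.IsSymm) {v : ι → ℝ} (hv : ∀ μ : ℝ, 0 < μ → ∀ x, M *ᵥ x = μ • x → v ⬝ᵥ x = 0) :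
    v ⬝ᵥ M *ᵥ v ≤ 0 := by
  classical
  have hsymm : (toEuclideanLin M).IsSymmetric :=
    isSymmetric_toEuclideanLin_iff.2 (by rwa [IsHermitian, conjTranspose_eq_transpose_of_trivial])
  exact inner_apply_self_nonpos_of_forall_inner_eigenvector hsymm (v := WithLp.toLp 2 v)
    fun μ hμ x hx => hv μ hμ x.ofLp (congrArg WithLp.ofLp hx)

theorem dotProduct_mulVec_self_nonpos_of_forall_weighted_eigenvector {M : Matrix ι ι ℝ}
    (hM : M.IsSymm) {d : ι → ℝ} (hd : ∀ i, 0 < d i) {v : ι → ℝ}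
    (hv : ∀ μ : ℝ, 0 < μ → ∀ x, M *ᵥ x = μ • (d * x) → v ⬝ᵥ M *ᵥ x = 0) : v ⬝ᵥ M *ᵥ v ≤ 0 := by
  classical
  set r : ι → ℝ := fun i => √(d i)
  have hr : ∀ i, r i ≠ 0 := fun i => (Real.sqrt_pos.2 (hd i)).ne'
  have hrd : d = r * r := funext fun i => (Real.mul_self_sqrt (hd i).le).symm
  have hcancel : r⁻¹ * (r * v) = v := funext fun i => inv_mul_cancel_left₀ (hr i) (v i)
  have hK : (diagonal r⁻¹ * M * diagonal r⁻¹).IsSymm := by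
    rw [IsSymm, transpose_mul, transpose_mul, diagonal_transpose, hM.eq, Matrix.mul_assoc]
  have h := dotProduct_mulVec_self_nonpos_of_forall_eigenvector hK (v := r * v)
    fun μ hμ y hy => by
      have hy' : y = r * (r⁻¹ * y) := funext fun i => (mul_inv_cancel_left₀ (hr i) (y i)).symm
      have hx : M *ᵥ (r⁻¹ * y) = μ • (d * (r⁻¹ * y)) := by
        rw [diagonal_mul_mul_mulVec] at hy
        rw [hrd, mul_assoc, ← hy', ← mul_smul_comm, ← hy]
        exact funext fun i => (mul_inv_cancel_left₀ (hr i) _).symm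
      have hzero := hv μ hμ _ hx
      rw [hx, dotProduct_smul, smul_eq_mul] at hzero
      rw [← (mul_eq_zero.1 hzero).resolve_left hμ.ne', hrd, mul_assoc, ← hy']
      exact Finset.sum_congr rfl fun i _ => by simp only [Pi.mul_apply]; ring
  rwa [dotProduct_diagonal_mul_mul_mulVec, hcancel] at h

theorem sum_mul_sub_sq {M : Matrix ι ι ℝ} (hM : M.IsSymm) (x : ι → ℝ) :
    ∑ i, ∑ j, M i j * (x i - x j) ^ 2 = 2 * (∑ i, (M *ᵥ 1) i * x i ^ 2 - x ⬝ᵥ M *ᵥ x) := by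
  have hswap : ∑ i, ∑ j, M i j * x j ^ 2 = ∑ i, ∑ j, M i j * x i ^ 2 := by
    rw [Finset.sum_comm]
    simp only [hM.apply]
  have hrow : ∑ i, (M *ᵥ 1) i * x i ^ 2 = ∑ i, ∑ j, M i j * x i ^ 2 := by
    simp only [mulVec, dotProduct, Pi.one_apply, mul_one, Finset.sum_mul]
  have hquad : x ⬝ᵥ M *ᵥ x = ∑ i, ∑ j, M i j * (x i * x j) := by
    simp only [mulVec, dotProduct, Finset.mul_sum, mul_left_comm]
  rw [hrow, hquad, two_mul, sub_add_sub_comm]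
  nth_rw 2 [← hswap]
  simp only [← Finset.sum_add_distrib, ← Finset.sum_sub_distrib]
  exact Finset.sum_congr rfl fun i _ => Finset.sum_congr rfl fun j _ => by ring

theorem eq_of_mulVec_eq_smul_of_le {M : Matrix ι ι ℝ} (hM : M.IsSymm) (hM0 : ∀ i j, 0 ≤ M i j)
    {μ : ℝ} (hμ : 0 < μ) {x : ι → ℝ} (hx : M *ᵥ x = μ • (M *ᵥ 1 * x))
    (hle : x ⬝ᵥ M *ᵥ x ≤ ∑ i, (M *ᵥ x) i ^ 2 / (M *ᵥ 1) i) {i j : ι} (hij : M i j ≠ 0) :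
    x i = x j := by
  set a := M *ᵥ 1
  set s := ∑ i, a i * x i ^ 2
  have hquad : x ⬝ᵥ M *ᵥ x = μ * s := by
    rw [hx, dotProduct, Finset.mul_sum]
    refine Finset.sum_congr rfl fun i _ => ?_
    simp only [Pi.smul_apply, Pi.mul_apply, smul_eq_mul]
    ring
  have hsq : ∑ i, (M *ᵥ x) i ^ 2 / a i = μ * (μ * s) := by
    rw [hx, Finset.mul_sum, Finset.mul_sum]
    refine Finset.sum_congr rfl fun i _ => ?_
    simp only [Pi.smul_apply, Pi.mul_apply, smul_eq_mul]
    rcases eq_or_ne (a i) 0 with ha | ha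
    · simp [ha]
    · field_simp
  have hs : s ≤ x ⬝ᵥ M *ᵥ x := by
    rw [hsq, hquad] at hle
    exact hquad ▸ le_of_mul_le_mul_left hle hμ
  have hnonneg : ∀ i j, 0 ≤ M i j * (x i - x j) ^ 2 := fun i j =>
    mul_nonneg (hM0 i j) (sq_nonneg _)
  have hsum : ∑ i, ∑ j, M i j * (x i - x j) ^ 2 = 0 :=
    le_antisymm (by rw [sum_mul_sub_sq hM]; linarith)
      (Finset.sum_nonneg fun i _ => Finset.sum_nonneg fun j _ => hnonneg i j)
  rw [Finset.sum_eq_zero_iff_of_nonneg fun i _ => Finset.sum_nonneg fun j _ => hnonneg i j] at hsum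
  have hzero := (Finset.sum_eq_zero_iff_of_nonneg fun j _ => hnonneg i j).1
    (hsum i (Finset.mem_univ i)) j (Finset.mem_univ j)
  exact sub_eq_zero.1 (pow_eq_zero_iff two_ne_zero |>.1 ((mul_eq_zero.1 hzero).resolve_left hij))

theorem exists_mulVec_eq_smul_of_forall_eq {M : Matrix ι ι ℝ} {μ : ℝ} {x : ι → ℝ}
    (hx : M *ᵥ x = μ • (M *ᵥ 1 * x)) (hconst : ∀ i j, M i ≠ 0 → M j ≠ 0 → x i = x j) :
    ∃ c : ℝ, M *ᵥ x = c • M *ᵥ 1 := by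
  by_cases h : ∃ k, M k ≠ 0
  · obtain ⟨k, hk⟩ := h
    refine ⟨μ * x k, hx.trans ?_⟩
    ext i
    by_cases hi : M i = 0
    · simp [mulVec, hi]
    · simp only [Pi.smul_apply, Pi.mul_apply, smul_eq_mul, hconst i k hi hk]; ring
  · push Not at h
    exact ⟨0, by ext i; simp [mulVec, h i]⟩

theorem dotProduct_mulVec_self_nonpos_of_bochner {M : Matrix ι ι ℝ} (hM : M.IsSymm)
    (hM0 : ∀ i j, 0 ≤ M i j)
    (hconn : ∀ i j, M i ≠ 0 → M j ≠ 0 → Relation.ReflTransGen (fun a b => M a b ≠ 0) i j)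
    (hbochner : ∀ v, v ⬝ᵥ M *ᵥ v ≤ ∑ i, (M *ᵥ v) i ^ 2 / (M *ᵥ 1) i) {v : ι → ℝ}
    (hv : v ⬝ᵥ M *ᵥ 1 = 0) : v ⬝ᵥ M *ᵥ v ≤ 0 := by
  classical
  have hsum : ∀ i, (M *ᵥ 1) i = ∑ j, M i j := fun i => by simp [mulVec, dotProduct]
  have hrow : ∀ i, (M *ᵥ 1) i = 0 → M i = 0 := fun i hi => by
    rw [hsum, Finset.sum_eq_zero_iff_of_nonneg fun j _ => hM0 i j] at hi
    exact funext fun j => hi j (Finset.mem_univ j)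
  set d : ι → ℝ := fun i => if (M *ᵥ 1) i = 0 then 1 else (M *ᵥ 1) i
  have hd : ∀ i, 0 < d i := fun i => by
    by_cases h : (M *ᵥ 1) i = 0
    · simp [d, h]
    · simpa [d, h] using (hsum i ▸ Finset.sum_nonneg fun j _ => hM0 i j).lt_of_ne' h
  refine dotProduct_mulVec_self_nonpos_of_forall_weighted_eigenvector hM hd fun μ hμ x hx => ?_
  have hx' : M *ᵥ x = μ • (M *ᵥ 1 * x) := by
    ext i
    by_cases h : (M *ᵥ 1) i = 0
    · simp [mulVec, hrow i h]
    · simpa [d, h] using congrFun hx i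
  obtain ⟨c, hc⟩ := exists_mulVec_eq_smul_of_forall_eq hx' fun i j hi hj => by
    induction hconn i j hi hj with
    | refl => rfl
    | tail _ hab ih =>
      have hb : M _ ≠ 0 := fun h0 => hab (by rw [h0]; rfl)
      exact (ih hb).trans (eq_of_mulVec_eq_smul_of_le hM hM0 hμ hx' (hbochner x) hab)
  rw [hc, dotProduct_smul, hv, smul_zero]

theorem IsLorentzian.of_bochner {M : Matrix ι ι ℝ} (hM : M.IsSymm) (hM0 : ∀ i j, 0 ≤ M i j)
    (hconn : ∀ i j, M i ≠ 0 → M j ≠ 0 → Relation.ReflTransGen (fun a b => M a b ≠ 0) i j)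
    (hbochner : ∀ v, v ⬝ᵥ M *ᵥ v ≤ ∑ i, (M *ᵥ v) i ^ 2 / (M *ᵥ 1) i) : IsLorentzian M := by
  classical
  intro v w hw
  have hww : 0 ≤ w ⬝ᵥ M *ᵥ w := Finset.sum_nonneg fun i _ =>
    mul_nonneg (hw i) (Finset.sum_nonneg fun j _ => mul_nonneg (hM0 i j) (hw j))
  have hneg : ∀ u, toBilin' M u 1 = 0 → toBilin' M u u ≤ 0 := fun u hu => by
    rw [toBilin'_apply'] at hu ⊢
    exact dotProduct_mulVec_self_nonpos_of_bochner hM hM0 hconn hbochner hu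
  simpa only [toBilin'_apply'] using
    bilinForm_mul_le_sq (isSymm_toBilin'_iff_isSymm.2 hM) hneg v (w := w)
      (by rwa [toBilin'_apply'])

theorem IsLorentzian.smul {M : Matrix ι ι ℝ} (hM : IsLorentzian M) (c : ℝ) :
    IsLorentzian (c • M) := by
  intro v w hw
  simp only [smul_mulVec, dotProduct_smul, smul_eq_mul]
  calc _ = c ^ 2 * ((v ⬝ᵥ M *ᵥ v) * (w ⬝ᵥ M *ᵥ w)) := by ring
    _ ≤ c ^ 2 * (v ⬝ᵥ M *ᵥ w) ^ 2 := mul_le_mul_of_nonneg_left (hM v w hw) (sq_nonneg c)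
    _ = _ := by ring

theorem IsLorentzian.diagonal_mul_mul [DecidableEq ι] {M : Matrix ι ι ℝ} (hM : IsLorentzian M)
    {h : ι → ℝ} (hh : 0 ≤ h) : IsLorentzian (diagonal h * M * diagonal h) := by
  intro v w hw
  simpa only [dotProduct_diagonal_mul_mul_mulVec] using hM (h * v) (h * w) (mul_nonneg hh hw)

end Lorentzian

/-! ### Exchangeable two-letter weights -/

section Exchange

open Matrix

variable {ι : Type*} [Preorder ι]

open Classical in
/-- The label of the second letter of a two-letter word `i j`: a letter that can only be read
after `i` takes over the value at `i`. -/
noncomputable def pull (i : ι) (v : ι → ℝ) (j : ι) : ℝ := if i < j then v i else v j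

@[simp]
theorem pull_one (i : ι) : pull i 1 = 1 := funext fun j => by simp [pull]

/-- Weights of words under which neighbouring incomparable letters commute and no letter is read
directly after a larger one. -/
structure IsExchangeable (m : ι → ι → ℝ) : Prop where
  swap : ∀ {i j}, ¬i < j → ¬j < i → m i j = m j i
  zero : ∀ {i j}, j < i → m i j = 0

theorem IsExchangeable.sum {κ : Type*} (s : Finset κ) {m : κ → ι → ι → ℝ}
    (hm : ∀ k ∈ s, IsExchangeable (m k)) : IsExchangeable fun i j => ∑ k ∈ s, m k i j where
  swap hij hji := Finset.sum_congr rfl fun k hk => (hm k hk).swap hij hji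
  zero hji := Finset.sum_eq_zero fun k hk => (hm k hk).zero hji

variable [Fintype ι]

open Classical in
/-- The matrix of the quadratic form `v ↦ ∑ i, v i * ∑ j, m i j * pull i v j`
of a two-letter weight. -/
noncomputable def wordMatrix (m : ι → ι → ℝ) : Matrix ι ι ℝ :=
  of (fun i j => if i < j then 0 else m i j) + diagonal fun i => ∑ j with i < j, m i j

theorem wordMatrix_mulVec (m : ι → ι → ℝ) (v : ι → ℝ) (i : ι) :
    (wordMatrix m *ᵥ v) i = ∑ j, m i j * pull i v j := by
  classical
  rw [wordMatrix, add_mulVec, Pi.add_apply, mulVec_diagonal, Finset.sum_mul, Finset.sum_filter,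
    mulVec, dotProduct, ← Finset.sum_add_distrib]
  refine Finset.sum_congr rfl fun j _ => ?_
  by_cases h : i < j <;> simp [pull, h]

theorem dotProduct_wordMatrix_mulVec (m : ι → ι → ℝ) (v w : ι → ℝ) :
    v ⬝ᵥ wordMatrix m *ᵥ w = ∑ i, ∑ j, v i * (m i j * pull i w j) := by
  simp only [dotProduct, wordMatrix_mulVec, Finset.mul_sum]

theorem wordMatrix_const_mul (c : ℝ) (m : ι → ι → ℝ) :
    wordMatrix (fun i j => c * m i j) = c • wordMatrix m := by
  classical
  ext i j
  simp only [wordMatrix, Matrix.add_apply, of_apply, diagonal_apply, Matrix.smul_apply,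
    smul_eq_mul, ← Finset.mul_sum, mul_add, mul_ite, mul_zero]

theorem wordMatrix_mul_mul [DecidableEq ι] {h : ι → ℝ} (hh : ∀ i j, i < j → h i = h j)
    (m : ι → ι → ℝ) :
    wordMatrix (fun i j => h i * m i j * h j) = diagonal h * wordMatrix m * diagonal h := by
  classical
  ext i j
  have hsum : ∑ j with i < j, h i * m i j * h j = h i * (∑ j with i < j, m i j) * h i := by
    rw [Finset.mul_sum, Finset.sum_mul]
    exact Finset.sum_congr rfl fun j hj => by rw [hh i j (Finset.mem_filter.1 hj).2]
  rw [mul_diagonal, diagonal_mul, wordMatrix, wordMatrix]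
  simp only [Matrix.add_apply, of_apply, diagonal_apply, mul_add, add_mul, mul_ite, ite_mul,
    mul_zero, zero_mul]
  rcases eq_or_ne i j with rfl | hne
  · simpa using hsum
  · simp [hne]

theorem wordMatrix_nonneg {m : ι → ι → ℝ} (hm : ∀ i j, 0 ≤ m i j) (i j : ι) :
    0 ≤ wordMatrix m i j := by
  classical
  rw [wordMatrix, Matrix.add_apply, of_apply, diagonal_apply]
  refine add_nonneg ?_ ?_ <;> split_ifs
  exacts [le_rfl, hm i j, Finset.sum_nonneg fun l _ => hm i l, le_rfl]

theorem IsExchangeable.isSymm_wordMatrix {m : ι → ι → ℝ} (hm : IsExchangeable m) :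
    (wordMatrix m).IsSymm := by
  ext i j
  rw [transpose_apply]
  rcases eq_or_ne i j with rfl | hne
  · rfl
  simp only [wordMatrix, Matrix.add_apply, of_apply, diagonal_apply, hne, hne.symm, if_false,
    add_zero]
  by_cases hij : i < j
  · simp [hij, hm.zero hij]
  by_cases hji : j < i
  · simp [hji, hm.zero hji]
  · simp [hij, hji, hm.swap hij hji]

theorem IsExchangeable.sum_mul_pull {m : ι → ι → ℝ} (hm : IsExchangeable m) (u : ι → ℝ) :
    ∑ i, ∑ j, m i j * pull i u j = ∑ i, ∑ j, m i j * u i := by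
  have h : 1 ⬝ᵥ wordMatrix m *ᵥ u = u ⬝ᵥ wordMatrix m *ᵥ 1 := by
    rw [dotProduct_comm u, dotProduct_mulVec, ← mulVec_transpose, hm.isSymm_wordMatrix.eq]
  simpa only [dotProduct_wordMatrix_mulVec, pull_one, Pi.one_apply, one_mul, mul_one,
    mul_comm (u _)] using h

theorem sum_sum_nonneg_of_forall_add_swap_nonneg {κ : Type*} [Fintype κ] {F : κ → κ → ℝ}
    (hF : ∀ i j, 0 ≤ F i j + F j i) : 0 ≤ ∑ i, ∑ j, F i j := by
  have h : 0 ≤ ∑ i, ∑ j, (F i j + F j i) :=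
    Finset.sum_nonneg fun i _ => Finset.sum_nonneg fun j _ => hF i j
  simp only [Finset.sum_add_distrib] at h
  rw [Finset.sum_comm (f := fun i j => F j i)] at h
  linarith

theorem IsExchangeable.sum_mul_pull_sub_mul_nonneg {m : ι → ι → ℝ} (hm : IsExchangeable m)
    (hm0 : ∀ i j, 0 ≤ m i j) (v : ι → ℝ) (l : ι) :
    0 ≤ ∑ i, ∑ j, m i j * ((pull i v j - v i) * pull j (pull i v) l) := by
  -- The terms of `(i, j)` and `(j, i)` add up to a multiple of `(v j - v i) ^ 2`.
  refine sum_sum_nonneg_of_forall_add_swap_nonneg fun i j => ?_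
  by_cases hij : i < j
  · simp [pull, hij, hm.zero hij]
  by_cases hji : j < i
  · simp [pull, hji, hm.zero hji]
  classical
  have hpull : (v j - v i) * (pull j (pull i v) l - pull i (pull j v) l) =
      if i < l ∧ j < l then (v j - v i) ^ 2 else 0 := by
    by_cases hi : i < l <;> by_cases hj : j < l <;> simp [pull, hij, hji, hi, hj, sq]
  have hsq : 0 ≤ (v j - v i) * (pull j (pull i v) l - pull i (pull j v) l) := by
    rw [hpull]; split_ifs <;> positivity
  calc 0 ≤ m i j * ((v j - v i) * (pull j (pull i v) l - pull i (pull j v) l)) :=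
        mul_nonneg (hm0 i j) hsq
    _ = _ := by
      rw [← hm.swap hij hji, show pull i v j = v j from if_neg hij,
        show pull j v i = v i from if_neg hji]
      ring

variable {G : ι → ι → ι → ℝ}

theorem sum_mul_pull_le_sum_pull_mul_pull (hG : ∀ i j l, 0 ≤ G i j l)
    (h₁₂ : ∀ l, IsExchangeable fun i j => G i j l) (h₂₃ : ∀ i, IsExchangeable (G i))
    (v : ι → ℝ) :
    ∑ i, ∑ j, ∑ l, v i * (G i j l * pull i v j) ≤
      ∑ i, ∑ j, ∑ l, pull i v j * (G i j l * pull j (pull i v) l) := by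
  have hread : ∑ i, ∑ j, ∑ l, v i * (G i j l * pull i v j) =
      ∑ i, ∑ j, ∑ l, v i * (G i j l * pull j (pull i v) l) := by
    refine Finset.sum_congr rfl fun i _ => ?_
    simp only [← Finset.mul_sum, (h₂₃ i).sum_mul_pull (pull i v)]
  rw [hread, ← sub_nonneg]
  simp only [← Finset.sum_sub_distrib]
  have h := Finset.sum_nonneg fun l (_ : l ∈ Finset.univ) =>
    (h₁₂ l).sum_mul_pull_sub_mul_nonneg (fun i j => hG i j l) v l
  rw [Finset.sum_comm] at h
  refine h.trans_eq (Finset.sum_congr rfl fun i _ => ?_)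
  rw [Finset.sum_comm]
  exact Finset.sum_congr rfl fun j _ => Finset.sum_congr rfl fun l _ => by ring

theorem bochner_wordMatrix (hG : ∀ i j l, 0 ≤ G i j l)
    (h₁₂ : ∀ l, IsExchangeable fun i j => G i j l) (h₂₃ : ∀ i, IsExchangeable (G i))
    (hlor : ∀ i, IsLorentzian (wordMatrix (G i))) (v : ι → ℝ) :
    v ⬝ᵥ wordMatrix (fun i j => ∑ l, G i j l) *ᵥ v ≤
      ∑ i, (wordMatrix (fun i j => ∑ l, G i j l) *ᵥ v) i ^ 2 /
        (wordMatrix (fun i j => ∑ l, G i j l) *ᵥ 1) i := by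
  have hpull := sum_mul_pull_le_sum_pull_mul_pull hG h₁₂ h₂₃ v
  simp only [dotProduct_wordMatrix_mulVec, wordMatrix_mulVec, pull_one, Pi.one_apply, mul_one,
    Finset.sum_mul, Finset.mul_sum]
  refine hpull.trans (Finset.sum_le_sum fun i _ => ?_)
  have h := hlor i (pull i v) 1 zero_le_one
  simp only [dotProduct_wordMatrix_mulVec, pull_one, Pi.one_apply, one_mul, mul_one] at h
  have hmass : 0 ≤ ∑ j, ∑ l, G i j l :=
    Finset.sum_nonneg fun j _ => Finset.sum_nonneg fun l _ => hG i j l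
  rcases hmass.eq_or_lt' with h0 | hpos
  · have hzero : ∀ j l, G i j l = 0 := fun j l => by
      rw [Finset.sum_eq_zero_iff_of_nonneg fun j _ => Finset.sum_nonneg fun l _ => hG i j l] at h0
      exact (Finset.sum_eq_zero_iff_of_nonneg fun l _ => hG i j l).1 (h0 j (Finset.mem_univ j)) l
        (Finset.mem_univ l)
    simp [hzero]
  · rw [le_div_iff₀ hpos]
    simpa only [mul_comm (pull i v _)] using h

theorem isLorentzian_wordMatrix_sum (hG : ∀ i j l, 0 ≤ G i j l)
    (h₁₂ : ∀ l, IsExchangeable fun i j => G i j l) (h₂₃ : ∀ i, IsExchangeable (G i))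
    (hlor : ∀ i, IsLorentzian (wordMatrix (G i)))
    (hconn : ∀ i j, wordMatrix (fun i j => ∑ l, G i j l) i ≠ 0 →
      wordMatrix (fun i j => ∑ l, G i j l) j ≠ 0 →
      Relation.ReflTransGen (fun a b => wordMatrix (fun i j => ∑ l, G i j l) a b ≠ 0) i j) :
    IsLorentzian (wordMatrix fun i j => ∑ l, G i j l) :=
  .of_bochner (IsExchangeable.sum _ fun l _ => h₁₂ l).isSymm_wordMatrix
    (wordMatrix_nonneg fun i j => Finset.sum_nonneg fun l _ => hG i j l) hconn
    (bochner_wordMatrix hG h₁₂ h₂₃ hlor)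

end Exchange

/-! ### Removing elements from below and from above -/

section Removal

open Matrix

/-- A removal step in a poset `X`: `Sum.inl x` removes the element `x` from below and
`Sum.inr (toDual x)` removes it from above. In the order of the disjoint union, `i < j` means
that the step `i` has to precede `j`. -/
abbrev Letter (X : Type*) := X ⊕ Xᵒᵈ

/-- The element removed by a letter. -/
def Letter.elt {X : Type*} : Letter X → X := Sum.elim id OrderDual.ofDual

variable {X : Type*} [PartialOrder X] {S T : Finset X} {i j : Letter X}

/-- A letter can be read at `S` if it removes a minimal element of `S` from below or a maximal
element of `S` from above. -/
def Available (S : Finset X) (i : Letter X) : Prop := i.elt ∈ S ∧ ∀ j < i, j.elt ∉ S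

theorem available_inl {x : X} : Available S (.inl x) ↔ Minimal (· ∈ S) x := by
  rw [minimal_iff_forall_lt]
  simp [Available, Letter.elt, Sum.forall]

theorem available_inr {x : Xᵒᵈ} : Available S (.inr x) ↔ Maximal (· ∈ S) (OrderDual.ofDual x) := by
  rw [maximal_iff_forall_gt]
  simp [Available, Letter.elt, Sum.forall, OrderDual.forall, ← OrderDual.ofDual_lt_ofDual]

theorem Available.mono (hi : Available T i) (hST : S ⊆ T) (hiS : i.elt ∈ S) : Available S i :=
  ⟨hiS, fun j hj hjS => hi.2 j hj (hST hjS)⟩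

theorem Available.not_lt (hi : Available S i) (hj : Available S j) : ¬i < j :=
  fun h => hj.2 i h hi.1

variable [DecidableEq X]

theorem Available.erase (hj : Available S j) (h : i.elt ≠ j.elt) :
    Available (S.erase i.elt) j :=
  hj.mono (S.erase_subset _) (Finset.mem_erase.2 ⟨h.symm, hj.1⟩)

theorem Available.of_erase (hi : Available S i) (hj : Available (S.erase i.elt) j)
    (hij : ¬i < j) : Available S j := by
  refine ⟨Finset.mem_of_mem_erase hj.1, fun k hk hkS => ?_⟩
  have hki : k.elt = i.elt := by
    by_contra h
    exact hj.2 k hk (Finset.mem_erase.2 ⟨h, hkS⟩)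
  have hjS : j.elt ∈ S := Finset.mem_of_mem_erase hj.1
  rcases k with k | k <;> rcases j with j | j
  · rcases i with i | i
    · obtain rfl : k = i := hki
      exact hij hk
    · obtain rfl : k = i.ofDual := hki
      have hlt : k < j := Sum.inl_lt_inl_iff.1 hk
      exact hi.2 (.inr (.toDual j)) (Sum.inr_lt_inr_iff.2 hlt) hjS
  · exact Sum.not_inl_lt_inr hk
  · exact Sum.not_inr_lt_inl hk
  · rcases i with i | i
    · obtain rfl : k.ofDual = i := hki
      have hlt : k < j := Sum.inr_lt_inr_iff.1 hk
      exact hi.2 (.inl j.ofDual) (Sum.inl_lt_inl_iff.2 hlt) hjS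
    · obtain rfl : k = i := hki
      exact hij hk

omit [DecidableEq X] in
theorem Available.exists_elt_ne (hi : Available S i) (hS : 1 < S.card) :
    ∃ k, Available S k ∧ i.elt ≠ k.elt := by
  classical
  have hne : (S.erase i.elt).Nonempty := by
    rw [← Finset.card_pos, Finset.card_erase_of_mem hi.1]; omega
  obtain ⟨k, hk, hik⟩ : ∃ k, Available (S.erase i.elt) k ∧ ¬i < k := by
    rcases i with x | x
    · obtain ⟨y, hy⟩ := (S.erase x).exists_maximal hne
      exact ⟨.inr (.toDual y), available_inr.2 hy, Sum.not_inl_lt_inr⟩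
    · obtain ⟨y, hy⟩ := (S.erase x.ofDual).exists_minimal hne
      exact ⟨.inl y, available_inl.2 hy, Sum.not_inr_lt_inl⟩
  exact ⟨k, hi.of_erase hk hik, (Finset.ne_of_mem_erase hk.1).symm⟩

open Classical in
/-- The operator on functions of finite subsets of `X` that reads the letter `i` with weight
`W i`, and vanishes at the sets where `i` is not available. -/
noncomputable def removal (W : Letter X → ℝ) (i : Letter X) : Module.End ℝ (Finset X → ℝ) where
  toFun φ S := if Available S i then W i * φ (S.erase i.elt) else 0
  map_add' φ ψ := by ext S; simp only [Pi.add_apply]; split_ifs <;> ring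
  map_smul' c φ := by
    ext S
    simp only [Pi.smul_apply, smul_eq_mul, RingHom.id_apply]
    split_ifs <;> ring

variable {W : Letter X → ℝ} {φ : Finset X → ℝ}

theorem removal_apply_of_available (h : Available S i) :
    removal W i φ S = W i * φ (S.erase i.elt) := if_pos h

theorem removal_apply_of_not_available (h : ¬Available S i) : removal W i φ S = 0 := if_neg h

theorem removal_mul (h W : Letter X → ℝ) (i : Letter X) :
    removal (h * W) i = h i • removal W i := by
  ext φ S
  by_cases hi : Available S i
  · simp [removal_apply_of_available hi, mul_assoc]
  · simp [removal_apply_of_not_available hi]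

theorem removal_removal_of_lt (W : Letter X → ℝ) (φ : Finset X → ℝ) (h : j < i) :
    removal W i (removal W j φ) = 0 := by
  ext S
  by_cases hi : Available S i
  · have hj : ¬Available (S.erase i.elt) j := fun hj => hi.2 j h (Finset.mem_of_mem_erase hj.1)
    simp [removal_apply_of_available hi, removal_apply_of_not_available hj]
  · exact removal_apply_of_not_available hi

theorem removal_comm (W : Letter X → ℝ) (φ : Finset X → ℝ) (hij : ¬i < j) (hji : ¬j < i) :
    removal W i (removal W j φ) = removal W j (removal W i φ) := by
  have hpair : ∀ {S : Finset X} {i j : Letter X}, ¬i < j →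
      Available S i ∧ Available (S.erase i.elt) j →
      Available S j ∧ Available (S.erase j.elt) i := fun h ⟨hi, hj⟩ =>
    ⟨hi.of_erase hj h, hi.erase (Finset.ne_of_mem_erase hj.1)⟩
  ext S
  by_cases h : Available S i ∧ Available (S.erase i.elt) j
  · have h' := hpair hij h
    rw [removal_apply_of_available h.1, removal_apply_of_available h.2,
      removal_apply_of_available h'.1, removal_apply_of_available h'.2, Finset.erase_right_comm]
    ring
  · have hzero : ∀ {i j : Letter X}, ¬(Available S i ∧ Available (S.erase i.elt) j) →
        removal W i (removal W j φ) S = 0 := fun {i j} h => by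
      by_cases hi : Available S i
      · rw [removal_apply_of_available hi, removal_apply_of_not_available fun hj => h ⟨hi, hj⟩,
          mul_zero]
      · exact removal_apply_of_not_available hi
    rw [hzero h, hzero (mt (hpair hji) h)]

theorem removal_nonneg (hW : 0 ≤ W) (hφ : 0 ≤ φ) (i : Letter X) : 0 ≤ removal W i φ := fun S => by
  by_cases hi : Available S i
  · rw [removal_apply_of_available hi]; exact mul_nonneg (hW i) (hφ _)
  · rw [removal_apply_of_not_available hi]; rfl

theorem isExchangeable_removal (W : Letter X → ℝ) (φ : Finset X → ℝ) (S : Finset X) :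
    IsExchangeable fun i j => removal W i (removal W j φ) S where
  swap hij hji := congrFun (removal_comm W φ hij hji) S
  zero hji := congrFun (removal_removal_of_lt W φ hji) S

theorem isExchangeable_removal_removal (W : Letter X → ℝ) (φ : Finset X → ℝ) (S : Finset X)
    (i : Letter X) :
    IsExchangeable fun j l => removal W i (removal W j (removal W l φ)) S where
  swap hjl hlj := by rw [removal_comm W φ hjl hlj]
  zero hlj := by rw [removal_removal_of_lt W φ hlj, map_zero]; rfl

variable [Fintype X]

/-- The matrix attached to reading two letters at `S` and evaluating `φ` at what remains. -/
noncomputable def pairMatrix (W : Letter X → ℝ) (φ : Finset X → ℝ) (S : Finset X) :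
    Matrix (Letter X) (Letter X) ℝ :=
  wordMatrix fun i j => removal W i (removal W j φ) S

theorem wordMatrix_removal_removal (i : Letter X) (hi : Available S i) :
    wordMatrix (fun j l => removal W i (removal W j (removal W l φ)) S) =
      W i • pairMatrix W φ (S.erase i.elt) := by
  simp only [removal_apply_of_available hi, wordMatrix_const_mul]
  rfl

theorem sum_removal_removal_removal (i j : Letter X) :
    ∑ l, removal W i (removal W j (removal W l φ)) S =
      removal W i (removal W j (∑ l, removal W l φ)) S := by
  rw [map_sum, map_sum, Finset.sum_apply]

theorem pairMatrix_row_eq_zero (hi : ¬Available S i) : pairMatrix W φ S i = 0 := by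
  ext j
  have h : ∀ j, removal W i (removal W j φ) S = 0 := fun j => removal_apply_of_not_available hi
  simp [pairMatrix, wordMatrix, diagonal_apply, h]

theorem pairMatrix_apply_ne_zero (hW : ∀ i, 0 < W i) (hi : Available S i) (hj : Available S j)
    (hij : i.elt ≠ j.elt) (hφ : 0 < φ ((S.erase i.elt).erase j.elt)) :
    pairMatrix W φ S i j ≠ 0 := by
  have hne : i ≠ j := fun h => hij (h ▸ rfl)
  have hentry : pairMatrix W φ S i j = W i * (W j * φ ((S.erase i.elt).erase j.elt)) := by
    simp [pairMatrix, wordMatrix, hne, hi.not_lt hj, removal_apply_of_available hi,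
      removal_apply_of_available (hj.erase hij)]
  rw [hentry]
  exact (mul_pos (hW i) (mul_pos (hW j) hφ)).ne'

theorem pairMatrix_connected (hW : ∀ i, 0 < W i) (hS : 1 < S.card)
    (hφ : ∀ T : Finset X, T.card + 2 = S.card → 0 < φ T) (hi : pairMatrix W φ S i ≠ 0)
    (hj : pairMatrix W φ S j ≠ 0) :
    Relation.ReflTransGen (fun a b => pairMatrix W φ S a b ≠ 0) i j := by
  have hedge : ∀ {i j}, Available S i → Available S j → i.elt ≠ j.elt →
      pairMatrix W φ S i j ≠ 0 := fun hi hj hij =>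
    pairMatrix_apply_ne_zero hW hi hj hij <| hφ _ <| by
      rw [Finset.card_erase_of_mem (hj.erase hij).1, Finset.card_erase_of_mem hi.1]; omega
  have hi : Available S i := not_imp_comm.1 pairMatrix_row_eq_zero hi
  have hj : Available S j := not_imp_comm.1 pairMatrix_row_eq_zero hj
  by_cases hij : i.elt = j.elt
  · obtain ⟨k, hk, hik⟩ := hi.exists_elt_ne hS
    exact .tail (.single (hedge hi hk hik)) (hedge hk hj (hij ▸ hik.symm))
  · exact .single (hedge hi hj hij)

theorem isLorentzian_pairMatrix_sum_removal (hW : ∀ i, 0 < W i) (hφ : 0 ≤ φ) (hS : 1 < S.card)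
    (hpos : ∀ T : Finset X, T.card + 2 = S.card → 0 < (∑ l, removal W l φ) T)
    (hlor : ∀ x ∈ S, IsLorentzian (pairMatrix W φ (S.erase x))) :
    IsLorentzian (pairMatrix W (∑ l, removal W l φ) S) := by
  have hW0 : 0 ≤ W := fun i => (hW i).le
  have h := isLorentzian_wordMatrix_sum
    (G := fun i j l => removal W i (removal W j (removal W l φ)) S)
    (fun i j l => removal_nonneg hW0 (removal_nonneg hW0 (removal_nonneg hW0 hφ l) j) i S)
    (fun l => isExchangeable_removal W (removal W l φ) S)
    (isExchangeable_removal_removal W φ S)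
    (fun i => by
      by_cases hi : Available S i
      · rw [wordMatrix_removal_removal i hi]
        exact (hlor _ hi.1).smul _
      · intro v w _
        simp [removal_apply_of_not_available hi, dotProduct_wordMatrix_mulVec])
  simp only [sum_removal_removal_removal] at h
  exact h fun i j => pairMatrix_connected hW hS hpos

theorem IsLorentzian.pairMatrix_mul (hM : IsLorentzian (pairMatrix W φ S)) {h : Letter X → ℝ}
    (hh : 0 ≤ h) (hcomp : ∀ i j, i < j → h i = h j) :
    IsLorentzian (pairMatrix (h * W) φ S) := by
  have : pairMatrix (h * W) φ S = diagonal h * pairMatrix W φ S * diagonal h := by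
    rw [pairMatrix, pairMatrix, ← wordMatrix_mul_mul hcomp]
    simp only [removal_mul, LinearMap.smul_apply, map_smul, Pi.smul_apply, smul_eq_mul]
    congr! 3
    ring
  exact this ▸ hM.diagonal_mul_mul hh

theorem isLorentzian_pairMatrix_sum_smul_removal (hW : ∀ i, 0 < W i) (hφ : 0 ≤ φ)
    (hS : 1 < S.card) {h : Letter X → ℝ} (hh : ∀ i, 0 < h i) (hcomp : ∀ i j, i < j → h i = h j)
    (hpos : ∀ T : Finset X, T.card + 2 = S.card → 0 < (∑ l, h l • removal W l φ) T)
    (hlor : ∀ x ∈ S, IsLorentzian (pairMatrix W φ (S.erase x))) :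
    IsLorentzian (pairMatrix W (∑ l, h l • removal W l φ) S) := by
  have hh0 : 0 ≤ h := fun i => (hh i).le
  -- Absorbing `h` into the weight reduces the labelling `h` to the constant one.
  have hscaled : IsLorentzian (pairMatrix (h * W) (∑ l, removal (h * W) l φ) S) :=
    isLorentzian_pairMatrix_sum_removal (fun i => mul_pos (hh i) (hW i)) hφ hS
      (by simpa only [removal_mul, LinearMap.smul_apply] using hpos)
      fun x hx => (hlor x hx).pairMatrix_mul hh0 hcomp
  have hback := hscaled.pairMatrix_mul (h := h⁻¹) (fun i => inv_nonneg.2 (hh0 i))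
    fun i j hij => congrArg Inv.inv (hcomp i j hij)
  have hinv : h⁻¹ * (h * W) = W := funext fun i => inv_mul_cancel_left₀ (hh i).ne' (W i)
  simpa only [hinv, removal_mul, LinearMap.smul_apply] using hback

end Removal

/-! ### Mixed counts -/

section MixedCount

open Matrix

variable {X : Type*} [PartialOrder X] [DecidableEq X] [Fintype X] {W : Letter X → ℝ}
  {φ : Finset X → ℝ} {S : Finset X}

omit [PartialOrder X] [DecidableEq X] in
theorem sum_letter_eq_sum {F : Letter X → ℝ} (hF : ∀ i : Letter X, i.elt ∉ S → F i = 0) :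
    ∑ i, F i = ∑ x ∈ S, (F (.inl x) + F (.inr (.toDual x))) := by
  rw [Fintype.sum_sum_type, ← OrderDual.toDual.sum_comp, ← Finset.sum_add_distrib]
  refine (Finset.sum_subset (Finset.subset_univ S) fun x _ hx => ?_).symm
  rw [hF (.inl x) hx, hF (.inr (.toDual x)) hx, add_zero]

omit [DecidableEq X] [Fintype X] in
theorem available_singleton (i : Letter X) : Available {i.elt} i :=
  ⟨Finset.mem_singleton_self _, fun j hj h => by
    have hji : j.elt = i.elt := Finset.mem_singleton.1 h
    rcases i with i | i <;> rcases j with j | j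
    · exact (Sum.inl_lt_inl_iff.1 hj).ne hji
    · exact Sum.not_inr_lt_inl hj
    · exact Sum.not_inl_lt_inr hj
    · exact (Sum.inr_lt_inr_iff.1 hj).ne hji⟩

theorem pairMatrix_one_mulVec {i : Letter X} {y : X} (hi : Available S i)
    (hS : S.erase i.elt = {y}) (w : Letter X → ℝ) :
    (pairMatrix W 1 S *ᵥ w) i = W i *
      (W (.inl y) * pull i w (.inl y) + W (.inr (.toDual y)) * pull i w (.inr (.toDual y))) := by
  have hsingle : ∀ j : Letter X, j.elt = y → removal W j 1 {y} = W j := fun j hj => by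
    subst hj
    simp [removal_apply_of_available (available_singleton j)]
  rw [pairMatrix, wordMatrix_mulVec]
  simp only [removal_apply_of_available hi, hS, mul_assoc, ← Finset.mul_sum]
  rw [sum_letter_eq_sum (S := {y}), Finset.sum_singleton, hsingle _ rfl, hsingle _ rfl]
  intro j hj
  rw [removal_apply_of_not_available fun h => hj h.1, zero_mul]

theorem pairMatrix_mulVec_of_not_available {i : Letter X} (hi : ¬Available S i)
    (w : Letter X → ℝ) : (pairMatrix W φ S *ᵥ w) i = 0 := by
  rw [mulVec, pairMatrix_row_eq_zero hi, zero_dotProduct]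

theorem dotProduct_pairMatrix_mulVec_pair {x y : X} (hxy : x ≠ y) (v w : Letter X → ℝ) :
    v ⬝ᵥ pairMatrix W φ {x, y} *ᵥ w =
      v (.inl x) * (pairMatrix W φ {x, y} *ᵥ w) (.inl x) +
        v (.inr (.toDual x)) * (pairMatrix W φ {x, y} *ᵥ w) (.inr (.toDual x)) +
      (v (.inl y) * (pairMatrix W φ {x, y} *ᵥ w) (.inl y) +
        v (.inr (.toDual y)) * (pairMatrix W φ {x, y} *ᵥ w) (.inr (.toDual y))) := by
  rw [dotProduct, sum_letter_eq_sum (S := {x, y}), Finset.sum_pair hxy]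
  intro i hi
  rw [pairMatrix_mulVec_of_not_available fun h => hi h.1, mul_zero]

theorem isLorentzian_of_forall_eq_binary {ι : Type*} [Fintype ι] {M : Matrix ι ι ℝ}
    {f g : (ι → ℝ) → ℝ} {p q r : ℝ} (hpr : p * r ≤ q ^ 2)
    (hM : ∀ v w, v ⬝ᵥ M *ᵥ w = p * (f v * f w) + q * (f v * g w + g v * f w) + r * (g v * g w)) :
    IsLorentzian M := fun v w _ => by
  rw [hM, hM, hM]
  nlinarith [mul_nonneg (sub_nonneg.2 hpr) (sq_nonneg (f v * g w - g v * f w))]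

theorem isLorentzian_pairMatrix_one_of_lt (hW : ∀ i, 0 < W i) (hanti : Antitone W) {x y : X}
    (hxy : x < y) : IsLorentzian (pairMatrix W 1 {x, y}) := by
  have hx : Available {x, y} (.inl x) := available_inl.2 ⟨by simp, by simp [hxy.le]⟩
  have hy : Available {x, y} (.inr (.toDual y)) := available_inr.2 ⟨by simp, by simp [hxy.le]⟩
  have hlt : (.inl x : Letter X) < .inl y := Sum.inl_lt_inl_iff.2 hxy
  have hlt' : (.inr (.toDual y) : Letter X) < .inr (.toDual x) := Sum.inr_lt_inr_iff.2 hxy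
  have hex : ({x, y} : Finset X).erase x = {y} := by simp [hxy.ne]
  have hey : ({x, y} : Finset X).erase y = {x} := by
    rw [Finset.pair_comm]; simp [hxy.ne']
  refine isLorentzian_of_forall_eq_binary (f := fun v => v (.inl x))
    (g := fun v => v (.inr (.toDual y))) (p := W (.inl x) * W (.inl y))
    (q := W (.inl x) * W (.inr (.toDual y)))
    (r := W (.inr (.toDual y)) * W (.inr (.toDual x))) ?_ fun v w => ?_
  · have := mul_le_mul_of_nonneg_left
      (mul_le_mul (hanti hlt.le) (hanti hlt'.le) (hW _).le (hW _).le)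
      (mul_pos (hW (.inl x)) (hW (.inr (.toDual y)))).le
    linarith
  · rw [dotProduct_pairMatrix_mulVec_pair hxy.ne, pairMatrix_one_mulVec hx hex,
      pairMatrix_one_mulVec hy hey,
      pairMatrix_mulVec_of_not_available fun h => hx.not_lt h hlt,
      pairMatrix_mulVec_of_not_available fun h => hy.not_lt h hlt']
    simp [pull, hxy]
    ring

theorem isLorentzian_pairMatrix_one_of_not_lt {x y : X} (hne : x ≠ y) (hxy : ¬x < y)
    (hyx : ¬y < x) : IsLorentzian (pairMatrix W 1 {x, y}) := by
  have hle : ¬x ≤ y := fun h => hxy (h.lt_of_ne hne)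
  have hle' : ¬y ≤ x := fun h => hyx (h.lt_of_ne hne.symm)
  have hinl : ∀ z ∈ ({x, y} : Finset X), Available {x, y} (.inl z) := fun z hz =>
    available_inl.2 ⟨hz, by aesop⟩
  have hinr : ∀ z ∈ ({x, y} : Finset X), Available {x, y} (.inr (.toDual z)) := fun z hz =>
    available_inr.2 ⟨hz, by aesop⟩
  have hx : x ∈ ({x, y} : Finset X) := by simp
  have hy : y ∈ ({x, y} : Finset X) := by simp
  have hex : ({x, y} : Finset X).erase x = {y} := by simp [hne]
  have hey : ({x, y} : Finset X).erase y = {x} := by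
    rw [Finset.pair_comm]; simp [hne.symm]
  refine isLorentzian_of_forall_eq_binary (p := 0) (q := 1) (r := 0)
    (f := fun v => W (.inl x) * v (.inl x) + W (.inr (.toDual x)) * v (.inr (.toDual x)))
    (g := fun v => W (.inl y) * v (.inl y) + W (.inr (.toDual y)) * v (.inr (.toDual y)))
    (by norm_num) fun v w => ?_
  rw [dotProduct_pairMatrix_mulVec_pair hne, pairMatrix_one_mulVec (hinl x hx) hex,
    pairMatrix_one_mulVec (hinl y hy) hey, pairMatrix_one_mulVec (hinr x hx) hex,
    pairMatrix_one_mulVec (hinr y hy) hey]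
  simp [pull, hxy, hyx]
  ring

theorem isLorentzian_pairMatrix_one (hW : ∀ i, 0 < W i) (hanti : Antitone W) (hS : S.card = 2) :
    IsLorentzian (pairMatrix W 1 S) := by
  obtain ⟨x, y, hne, rfl⟩ := Finset.card_eq_two.1 hS
  by_cases hxy : x < y
  · exact isLorentzian_pairMatrix_one_of_lt hW hanti hxy
  by_cases hyx : y < x
  · exact Finset.pair_comm x y ▸ isLorentzian_pairMatrix_one_of_lt hW hanti hyx
  · exact isLorentzian_pairMatrix_one_of_not_lt hne hxy hyx

/-- The discrete mixed volume of labellings `hs` of the letters: the total weight of the words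
`i₁ i₂ ⋯` that can be read at `S`, a word contributing `∏ hs[k] iₖ * W iₖ`. -/
noncomputable def mixedCount (W : Letter X → ℝ) (hs : List (Letter X → ℝ)) : Finset X → ℝ :=
  hs.foldr (fun h φ => ∑ i, h i • removal W i φ) 1

theorem mixedCount_cons (W h : Letter X → ℝ) (hs : List (Letter X → ℝ)) :
    mixedCount W (h :: hs) = ∑ i, h i • removal W i (mixedCount W hs) := rfl

theorem mixedCount_cons_apply (W h : Letter X → ℝ) (hs : List (Letter X → ℝ)) (S : Finset X) :
    mixedCount W (h :: hs) S = ∑ i, h i * removal W i (mixedCount W hs) S := by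
  simp [mixedCount_cons]

theorem mixedCount_nonneg (hW : 0 ≤ W) {hs : List (Letter X → ℝ)} (hhs : ∀ h ∈ hs, 0 ≤ h) :
    0 ≤ mixedCount W hs := by
  induction hs with
  | nil => exact zero_le_one
  | cons h hs ih =>
    rw [List.forall_mem_cons] at hhs
    rw [mixedCount_cons]
    exact Finset.sum_nonneg fun i _ =>
      smul_nonneg (hhs.1 i) (removal_nonneg hW (ih hhs.2) i)

theorem mixedCount_pos (hW : ∀ i, 0 < W i) {hs : List (Letter X → ℝ)}
    (hhs : ∀ h ∈ hs, ∀ i, 0 < h i) (hS : hs.length ≤ S.card) : 0 < mixedCount W hs S := by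
  induction hs generalizing S with
  | nil => exact zero_lt_one
  | cons h hs ih =>
    rw [List.forall_mem_cons] at hhs
    rw [List.length_cons] at hS
    obtain ⟨x, hx⟩ := S.exists_minimal (Finset.card_pos.1 (by omega))
    have havail : Available S (.inl x) := available_inl.2 hx
    have hφ : 0 ≤ mixedCount W hs :=
      mixedCount_nonneg (fun i => (hW i).le) fun g hg i => (hhs.2 g hg i).le
    rw [mixedCount_cons_apply]
    refine Finset.sum_pos' (fun i _ => ?_) ⟨.inl x, Finset.mem_univ _, ?_⟩
    · exact mul_nonneg (hhs.1 i).le (removal_nonneg (fun i => (hW i).le) hφ i S)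
    · rw [removal_apply_of_available havail]
      refine mul_pos (hhs.1 _) (mul_pos (hW _) (ih hhs.2 ?_))
      rw [Finset.card_erase_of_mem havail.1]; omega

theorem isLorentzian_pairMatrix_mixedCount (hW : ∀ i, 0 < W i) (hanti : Antitone W)
    {hs : List (Letter X → ℝ)} (hhs : ∀ h ∈ hs, ∀ i, 0 < h i)
    (hcomp : ∀ h ∈ hs, ∀ i j, i < j → h i = h j) (hS : S.card = hs.length + 2) :
    IsLorentzian (pairMatrix W (mixedCount W hs) S) := by
  induction hs generalizing S with
  | nil => exact isLorentzian_pairMatrix_one hW hanti hS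
  | cons h hs ih =>
    have hhs' := List.forall_mem_cons.1 hhs
    have hcomp' := List.forall_mem_cons.1 hcomp
    rw [List.length_cons] at hS
    refine isLorentzian_pairMatrix_sum_smul_removal hW
      (mixedCount_nonneg (fun i => (hW i).le) fun g hg i => (hhs'.2 g hg i).le) (by omega)
      hhs'.1 hcomp'.1 (fun T hT => ?_) fun x hx => ih hhs'.2 hcomp'.2 ?_
    · rw [← mixedCount_cons]
      exact mixedCount_pos hW hhs (by rw [List.length_cons]; omega)
    · rw [Finset.card_erase_of_mem hx]; omega

theorem dotProduct_pairMatrix_mulVec (W f : Letter X → ℝ) {g : Letter X → ℝ}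
    (hg : ∀ i j, i < j → g i = g j) (hs : List (Letter X → ℝ)) (S : Finset X) :
    f ⬝ᵥ pairMatrix W (mixedCount W hs) S *ᵥ g = mixedCount W (f :: g :: hs) S := by
  have hpull : ∀ i, pull i g = g := fun i => funext fun j => by
    by_cases hij : i < j <;> simp [pull, hij, hg i j]
  rw [pairMatrix, dotProduct_wordMatrix_mulVec, mixedCount_cons_apply]
  refine Finset.sum_congr rfl fun i _ => ?_
  rw [mixedCount_cons, map_sum, Finset.sum_apply, Finset.mul_sum]
  simp [hpull, mul_comm]

theorem continuous_mixedCount {α : Type*} [TopologicalSpace α] {W : α → Letter X → ℝ}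
    (hW : Continuous W) {hs : List (α → Letter X → ℝ)} (hhs : ∀ h ∈ hs, Continuous h) :
    Continuous fun a => mixedCount (W a) (hs.map fun h => h a) := by
  induction hs with
  | nil => exact continuous_const
  | cons h hs ih =>
    rw [List.forall_mem_cons] at hhs
    refine continuous_pi fun S => ?_
    simp only [List.map_cons, mixedCount_cons_apply]
    refine continuous_finsetSum _ fun i _ => ((continuous_apply i).comp hhs.1).mul ?_
    by_cases hi : Available S i
    · simp only [removal_apply_of_available hi]
      exact ((continuous_apply i).comp hW).mul ((continuous_apply _).comp (ih hhs.2))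
    · simp only [removal_apply_of_not_available hi]
      exact continuous_const

theorem mixedCount_mul_le_sq_of_pos (hW : ∀ i, 0 < W i) (hanti : Antitone W)
    {f g : Letter X → ℝ} {hs : List (Letter X → ℝ)} (hg : 0 ≤ g)
    (hhs : ∀ h ∈ hs, ∀ i, 0 < h i) (hcomp : ∀ h ∈ f :: g :: hs, ∀ i j, i < j → h i = h j)
    (hS : S.card = hs.length + 2) :
    mixedCount W (f :: f :: hs) S * mixedCount W (g :: g :: hs) S ≤
      mixedCount W (f :: g :: hs) S ^ 2 := by
  simp only [List.forall_mem_cons] at hcomp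
  obtain ⟨hf', hg', hhs'⟩ := hcomp
  simpa only [dotProduct_pairMatrix_mulVec W _ hf', dotProduct_pairMatrix_mulVec W _ hg'] using
    isLorentzian_pairMatrix_mixedCount hW hanti hhs hhs' hS f g hg

theorem mixedCount_mul_le_sq (hW : 0 ≤ W) (hanti : Antitone W) {f g : Letter X → ℝ}
    {hs : List (Letter X → ℝ)} (hg : 0 ≤ g) (hhs : ∀ h ∈ hs, 0 ≤ h)
    (hcomp : ∀ h ∈ f :: g :: hs, ∀ i j, i < j → h i = h j) (hS : S.card = hs.length + 2) :
    mixedCount W (f :: f :: hs) S * mixedCount W (g :: g :: hs) S ≤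
      mixedCount W (f :: g :: hs) S ^ 2 := by
  -- The positive case applies to `W + ε` and `h + ε`; let `ε` tend to `0`.
  set N : (Letter X → ℝ) → (Letter X → ℝ) → ℝ → ℝ := fun u v ε =>
    mixedCount (fun i => W i + ε) (u :: v :: hs.map fun h i => h i + ε) S
  have hN : ∀ u v, Continuous (N u v) := fun u v => by
    have := continuous_mixedCount (X := X) (α := ℝ) (W := fun ε i => W i + ε)
      (hs := (fun _ => u) :: (fun _ => v) :: hs.map fun h ε i => h i + ε) (by fun_prop)
      (by simpa using ⟨continuous_const, continuous_const, fun h _ => by fun_prop⟩)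
    simpa [N, Function.comp_def] using (continuous_apply S).comp this
  have hle : ∀ ε > 0, N f f ε * N g g ε ≤ N f g ε ^ 2 := fun ε hε => by
    refine mixedCount_mul_le_sq_of_pos (fun i => add_pos_of_nonneg_of_pos (hW i) hε)
      (fun i j hij => by simpa using hanti hij) hg ?_ ?_ (by simpa using hS)
    · simpa using fun h hh i => add_pos_of_nonneg_of_pos (hhs h hh i) hε
    · simp only [List.forall_mem_cons, List.forall_mem_map] at hcomp ⊢
      exact ⟨hcomp.1, hcomp.2.1, fun h hh i j hij => by rw [hcomp.2.2 h hh i j hij]⟩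
  have hlim := le_of_tendsto_of_tendsto (b := nhdsWithin (0 : ℝ) (Set.Ioi 0))
    (((hN f f).mul (hN g g)).tendsto 0 |>.mono_left nhdsWithin_le_nhds)
    (((hN f g).pow 2).tendsto 0 |>.mono_left nhdsWithin_le_nhds)
    (eventually_nhdsWithin_of_forall hle)
  simpa [N] using hlim

end MixedCount

/-! ### Linear extensions as lists -/

section Counting

variable {X : Type*}

/-- The list `l` enumerates `S` together with the marked element `z`, never puts `v` before `u`
if `r u v`, and has `z` at the 0-based position `a`. For `r = (· < ·)` these are the linear
extensions of `S ∪ {z}` in which exactly `a` elements precede `z`. -/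
structure IsLinExtAt (r : X → X → Prop) (z : X) (S : Finset X) (a : ℕ) (l : List X) : Prop where
  nodup : l.Nodup
  pairwise : l.Pairwise fun u v => ¬r v u
  mem_iff : ∀ u, u ∈ l ↔ u = z ∨ u ∈ S
  getElem?_eq : l[a]? = some z

variable {r : X → X → Prop} {z : X} {S : Finset X} {a b : ℕ} {l : List X}

theorem IsLinExtAt.length_eq (h : IsLinExtAt r z S a l) (hz : z ∉ S) : l.length = S.card + 1 := by
  classical
  have hl : l.toFinset = insert z S := Finset.ext fun u => by simp [h.mem_iff]
  rw [← List.toFinset_card_of_nodup h.nodup, hl, Finset.card_insert_of_notMem hz]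

theorem IsLinExtAt.reverse (h : IsLinExtAt r z S a l) (hz : z ∉ S) (hab : a + b = S.card) :
    IsLinExtAt (flip r) z S b l.reverse where
  nodup := List.nodup_reverse.2 h.nodup
  pairwise := List.pairwise_reverse.2 h.pairwise
  mem_iff u := List.mem_reverse.trans (h.mem_iff u)
  getElem?_eq := by
    have hlen := h.length_eq hz
    rw [List.getElem?_reverse (by omega), show l.length - 1 - b = a by omega, h.getElem?_eq]

theorem isLinExtAt_cons [DecidableEq X] {y : X} (hz : z ∉ S) :
    IsLinExtAt r z S (a + 1) (y :: l) ↔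
      (y ∈ S ∧ (∀ u ∈ S.erase y, ¬r u y) ∧ ¬r z y) ∧ IsLinExtAt r z (S.erase y) a l := by
  constructor
  · rintro ⟨hnodup, hpair, hmem, hget⟩
    rw [List.nodup_cons] at hnodup
    rw [List.pairwise_cons] at hpair
    rw [List.getElem?_cons_succ] at hget
    have hzl : z ∈ l := List.mem_of_getElem? hget
    have hyz : y ≠ z := fun h => hnodup.1 (h ▸ hzl)
    have hl : ∀ u, u ∈ l ↔ u = z ∨ u ∈ S.erase y := fun u => by
      rcases eq_or_ne u y with rfl | huy
      · simp [hnodup.1, hyz]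
      · simpa [huy] using hmem u
    have hyS : y ∈ S := ((hmem y).1 List.mem_cons_self).resolve_left hyz
    exact ⟨⟨hyS, fun u hu => hpair.1 u ((hl u).2 (.inr hu)), hpair.1 z hzl⟩,
      hnodup.2, hpair.2, hl, hget⟩
  · rintro ⟨⟨hyS, hSy, hzy⟩, hl⟩
    have hyz : y ≠ z := fun h => hz (h ▸ hyS)
    refine ⟨List.nodup_cons.2 ⟨fun h => ?_, hl.nodup⟩,
      List.pairwise_cons.2 ⟨fun u hu => ?_, hl.pairwise⟩, fun u => ?_, hl.getElem?_eq⟩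
    · simp [hl.mem_iff, hyz] at h
    · rcases (hl.mem_iff u).1 hu with rfl | hu
      exacts [hzy, hSy u hu]
    · rw [List.mem_cons, hl.mem_iff, Finset.mem_erase]
      by_cases huy : u = y <;> simp [huy, hyS]

/-- The number of lists satisfying `IsLinExtAt`; for `r = (· < ·)`, the number of linear
extensions of `S ∪ {z}` in which exactly `a` elements precede `z`. -/
noncomputable def linExtCount (r : X → X → Prop) (z : X) (S : Finset X) (a : ℕ) : ℕ :=
  Nat.card {l : List X // IsLinExtAt r z S a l}

theorem linExtCount_flip (hz : z ∉ S) (hab : a + b = S.card) :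
    linExtCount (flip r) z S b = linExtCount r z S a :=
  Nat.card_congr
    { toFun l := ⟨l.1.reverse, l.2.reverse hz (by omega)⟩
      invFun l := ⟨l.1.reverse, l.2.reverse hz hab⟩
      left_inv l := Subtype.ext l.1.reverse_reverse
      right_inv l := Subtype.ext l.1.reverse_reverse }

theorem linExtCount_empty (r : X → X → Prop) (z : X) : linExtCount r z ∅ 0 = 1 := by
  have h : ∀ l, IsLinExtAt r z ∅ 0 l ↔ l = [z] := fun l => by
    constructor
    · intro h
      obtain ⟨u, rfl⟩ := List.length_eq_one_iff.1 (h.length_eq (Finset.notMem_empty z))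
      simpa using h.getElem?_eq
    · rintro rfl
      exact ⟨by simp, by simp, by simp, rfl⟩
  simp [linExtCount, h]

theorem card_list_eq_sum_cons {α : Type*} [Fintype α] {P : List α → Prop} (hnil : ¬P [])
    (hP : ∀ l, P l → l.Nodup) :
    Nat.card {l // P l} = ∑ y, Nat.card {l // P (y :: l)} := by
  have hfin : ∀ y, Finite {l // P (y :: l)} := fun y =>
    Finite.of_injective (β := {l : List α // l.Nodup}) (fun l => ⟨l.1, (hP _ l.2).of_cons⟩)
      fun l l' h => Subtype.ext (by simpa only [Subtype.mk.injEq] using h)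
  rw [← Nat.card_sigma]
  refine (Nat.card_eq_of_bijective
    (fun p : (y : α) × {l // P (y :: l)} => (⟨p.1 :: p.2.1, p.2.2⟩ : {l // P l})) ⟨?_, ?_⟩).symm
  · rintro ⟨y, l, hl⟩ ⟨y', l', hl'⟩ h
    obtain ⟨rfl, rfl⟩ := List.cons.inj (congrArg Subtype.val h)
    rfl
  · rintro ⟨_ | ⟨y, l⟩, hl⟩
    exacts [(hnil hl).elim, ⟨⟨y, l, hl⟩, rfl⟩]

variable [Fintype X]

theorem exists_ofFn_symm_eq (hl : l.Nodup) (hmem : ∀ u, u ∈ l) :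
    ∃ ρ : X ≃ Fin (Fintype.card X), List.ofFn ρ.symm = l := by
  classical
  set e := hl.getEquivOfForallMemList l hmem
  have hlen : Fintype.card X = l.length := by rw [← Fintype.card_congr e, Fintype.card_fin]
  refine ⟨e.symm.trans (finCongr hlen.symm), List.ext_getElem (by simp [hlen]) fun i hi hi' => ?_⟩
  rw [List.getElem_ofFn]
  rfl

variable [DecidableEq X]

open Classical in
theorem linExtCount_succ (hz : z ∉ S) :
    linExtCount r z S (a + 1) =
      ∑ y, if y ∈ S ∧ (∀ u ∈ S.erase y, ¬r u y) ∧ ¬r z y then linExtCount r z (S.erase y) a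
        else 0 := by
  rw [linExtCount, card_list_eq_sum_cons (fun h => by simpa using h.getElem?_eq) fun l h => h.nodup]
  refine Finset.sum_congr rfl fun y _ => ?_
  simp only [isLinExtAt_cons hz]
  split_ifs with hy
  · simp only [and_iff_right hy]
    rfl
  · simp only [hy, false_and, Nat.card_of_isEmpty]

variable [PartialOrder X]

theorem isLinExtAt_ofFn_symm (ρ : X ≃ Fin (Fintype.card X)) :
    IsLinExtAt (· < ·) z (Finset.univ.erase z) a (List.ofFn ρ.symm) ↔
      (∀ u v, u < v → ρ u < ρ v) ∧ (ρ z).val = a := by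
  have hpair : (List.ofFn ρ.symm).Pairwise (fun u v => ¬v < u) ↔ ∀ u v, u < v → ρ u < ρ v := by
    rw [List.pairwise_ofFn]
    constructor
    · intro h u v huv
      refine (ρ.injective.ne huv.ne).lt_of_le (not_lt.1 fun hlt => ?_)
      exact h hlt (by simpa using huv)
    · intro h i j hij hlt
      exact (h _ _ hlt).not_gt (by simpa using hij)
  have hget : (List.ofFn ρ.symm)[a]? = some z ↔ (ρ z).val = a := by
    rw [List.getElem?_eq_some_iff]
    simp only [List.getElem_ofFn, List.length_ofFn, Equiv.symm_apply_eq, Fin.ext_iff]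
    exact ⟨fun ⟨_, h⟩ => h.symm, fun h => ⟨h ▸ (ρ z).isLt, h.symm⟩⟩
  refine ⟨fun h => ⟨hpair.1 h.pairwise, hget.1 h.getElem?_eq⟩, fun h =>
    ⟨List.nodup_ofFn.2 ρ.symm.injective, hpair.2 h.1, fun u => ?_, hget.2 h.2⟩⟩
  simpa [List.mem_ofFn, em] using ρ.symm.surjective u

theorem card_linearExtension_eq_linExtCount (z : X) (a : ℕ) :
    Nat.card {ρ : X ≃ Fin (Fintype.card X) // (∀ u v, u < v → ρ u < ρ v) ∧ (ρ z).val = a} =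
      linExtCount (· < ·) z (Finset.univ.erase z) a := by
  refine Nat.card_eq_of_bijective
    (fun ρ => ⟨List.ofFn ρ.1.symm, (isLinExtAt_ofFn_symm ρ.1).2 ρ.2⟩) ⟨fun ρ σ h => ?_, ?_⟩
  · exact Subtype.ext (Equiv.symm_bijective.injective
      (DFunLike.coe_injective (List.ofFn_injective (congrArg Subtype.val h))))
  · rintro ⟨l, hl⟩
    obtain ⟨ρ, rfl⟩ := exists_ofFn_symm_eq hl.nodup fun u => (hl.mem_iff u).2 (by simp [em])
    exact ⟨⟨ρ, (isLinExtAt_ofFn_symm ρ).1 hl⟩, rfl⟩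

end Counting

/-! ### Log-concavity -/

section LogConcavity

variable {X : Type*} [PartialOrder X] {z : X}

open Classical in
/-- The weight that forbids removing from below an element above `z`, and removing from above an
element below `z`. With it, mixed counts enumerate linear extensions in which `z` itself is never
removed. -/
noncomputable def fixedWeight (z : X) (i : Letter X) : ℝ :=
  if .inl z < i ∨ .inr (.toDual z) < i then 0 else 1

theorem fixedWeight_nonneg (z : X) : 0 ≤ fixedWeight z := fun i => by
  unfold fixedWeight
  split_ifs
  exacts [le_rfl, zero_le_one]

theorem antitone_fixedWeight (z : X) : Antitone (fixedWeight z) := fun i j hij => by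
  by_cases hi : .inl z < i ∨ .inr (.toDual z) < i
  · rw [fixedWeight, if_pos (hi.imp hij.trans_lt' hij.trans_lt')]
    exact fixedWeight_nonneg z i
  · rw [fixedWeight, fixedWeight, if_neg hi]
    split_ifs
    exacts [zero_le_one, le_rfl]

/-- The indicator of the removals from below (`true`), respectively from above (`false`). -/
def sideIndicator : Bool → Letter X → ℝ
  | true => Sum.elim 1 0
  | false => Sum.elim 0 1

omit [PartialOrder X] in
theorem sideIndicator_nonneg : ∀ b, 0 ≤ (sideIndicator b : Letter X → ℝ)
  | true => Sum.forall.2 ⟨fun _ => zero_le_one, fun _ => le_rfl⟩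
  | false => Sum.forall.2 ⟨fun _ => le_rfl, fun _ => zero_le_one⟩

theorem sideIndicator_eq_of_lt (b : Bool) {i j : Letter X} (hij : i < j) :
    sideIndicator b i = sideIndicator b j := by
  cases hij <;> cases b <;> rfl

variable [DecidableEq X] {S : Finset X} {φ : Finset X → ℝ} {y : X}

open Classical in
theorem removal_fixedWeight_inl :
    removal (fixedWeight z) (.inl y) φ S =
      if y ∈ S ∧ (∀ u ∈ S.erase y, ¬u < y) ∧ ¬z < y then φ (S.erase y) else 0 := by
  have hmin : Available S (.inl y) ↔ y ∈ S ∧ ∀ u ∈ S.erase y, ¬u < y := by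
    rw [available_inl, minimal_iff_forall_lt]
    grind
  have hW : fixedWeight z (.inl y) = if z < y then 0 else 1 := by simp [fixedWeight]
  simp only [← and_assoc, ← hmin]
  by_cases hy : Available S (.inl y)
  · by_cases hzy : z < y <;> simp [removal_apply_of_available hy, hW, hy, hzy, Letter.elt]
  · simp [removal_apply_of_not_available hy, hy]

open Classical in
theorem removal_fixedWeight_inr :
    removal (fixedWeight z) (.inr (.toDual y)) φ S =
      if y ∈ S ∧ (∀ u ∈ S.erase y, ¬y < u) ∧ ¬y < z then φ (S.erase y) else 0 := by
  have hmax : Available S (.inr (.toDual y)) ↔ y ∈ S ∧ ∀ u ∈ S.erase y, ¬y < u := by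
    rw [available_inr, OrderDual.ofDual_toDual, maximal_iff_forall_gt]
    grind
  have hW : fixedWeight z (.inr (.toDual y)) = if y < z then 0 else 1 := by simp [fixedWeight]
  simp only [← and_assoc, ← hmax]
  by_cases hy : Available S (.inr (.toDual y))
  · by_cases hzy : y < z <;> simp [removal_apply_of_available hy, hW, hy, hzy, Letter.elt]
  · simp [removal_apply_of_not_available hy, hy]

variable [Fintype X]

open Classical in
theorem mixedCount_sideIndicator_true_cons (z : X) (hs : List (Letter X → ℝ)) (S : Finset X) :
    mixedCount (fixedWeight z) (sideIndicator true :: hs) S =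
      ∑ y, if y ∈ S ∧ (∀ u ∈ S.erase y, ¬u < y) ∧ ¬z < y then
        mixedCount (fixedWeight z) hs (S.erase y) else 0 := by
  simp [mixedCount_cons_apply, sideIndicator, removal_fixedWeight_inl]

open Classical in
theorem mixedCount_sideIndicator_false_cons (z : X) (hs : List (Letter X → ℝ)) (S : Finset X) :
    mixedCount (fixedWeight z) (sideIndicator false :: hs) S =
      ∑ y, if y ∈ S ∧ (∀ u ∈ S.erase y, ¬y < u) ∧ ¬y < z then
        mixedCount (fixedWeight z) hs (S.erase y) else 0 := by
  rw [mixedCount_cons_apply, Fintype.sum_sum_type, ← OrderDual.toDual.sum_comp]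
  simp [sideIndicator, removal_fixedWeight_inr]

theorem mixedCount_sideIndicator_eq_linExtCount (hz : z ∉ S) (word : List Bool)
    (hS : S.card = word.length) :
    mixedCount (fixedWeight z) (word.map sideIndicator) S =
      linExtCount (· < ·) z S (word.count true) := by
  induction word generalizing S with
  | nil =>
    obtain rfl := Finset.card_eq_zero.1 hS
    simp [mixedCount, linExtCount_empty]
  | cons side word ih =>
    rw [List.length_cons] at hS
    have hz' : ∀ y, z ∉ S.erase y := fun y h => hz (Finset.mem_of_mem_erase h)
    have hcard : ∀ {y}, y ∈ S → (S.erase y).card = word.length := fun hy => by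
      rw [Finset.card_erase_of_mem hy]; omega
    have hcount := List.count_false_add_count_true word
    cases side with
    | true =>
      rw [List.map_cons, mixedCount_sideIndicator_true_cons, List.count_cons_self,
        linExtCount_succ hz, Nat.cast_sum]
      refine Finset.sum_congr rfl fun y _ => ?_
      split_ifs with hy
      exacts [ih (hz' y) (hcard hy.1), Nat.cast_zero.symm]
    | false =>
      rw [List.map_cons, mixedCount_sideIndicator_false_cons, List.count_cons_of_ne (by decide),
        ← linExtCount_flip hz (b := word.count false + 1) (by omega), linExtCount_succ hz,
        Nat.cast_sum]
      refine Finset.sum_congr rfl fun y _ => ?_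
      by_cases hy : y ∈ S ∧ (∀ u ∈ S.erase y, ¬y < u) ∧ ¬y < z
      · rw [if_pos hy, if_pos (by exact hy), ih (hz' y) (hcard hy.1),
          linExtCount_flip (a := word.count true) (hz' y) (by rw [hcard hy.1]; omega)]
      · rw [if_neg hy, if_neg (by exact hy), Nat.cast_zero]

omit [DecidableEq X] [Fintype X] in
theorem linExtCount_mul_le_sq [Finite X] (hz : z ∉ S) {a b : ℕ} (hS : S.card = a + b + 2) :
    linExtCount (· < ·) z S a * linExtCount (· < ·) z S (a + 2) ≤
      linExtCount (· < ·) z S (a + 1) ^ 2 := by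
  classical
  cases nonempty_fintype X
  set word := List.replicate a true ++ List.replicate b false
  have hlen : word.length = a + b := by simp [word]
  have hcount : word.count true = a := by simp [word, List.count_replicate]
  have hmixed : ∀ s t, mixedCount (fixedWeight z)
      (sideIndicator s :: sideIndicator t :: word.map sideIndicator) S =
        linExtCount (· < ·) z S ((s :: t :: word).count true) := fun s t =>
    mixedCount_sideIndicator_eq_linExtCount hz (s :: t :: word) (by simp [hlen, hS])
  have hle := mixedCount_mul_le_sq (f := sideIndicator true) (g := sideIndicator false)
    (hs := word.map sideIndicator) (fixedWeight_nonneg z) (antitone_fixedWeight z)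
    (sideIndicator_nonneg false)
    (List.forall_mem_map.2 fun side _ => sideIndicator_nonneg side)
    (List.forall_mem_map (l := true :: false :: word).2 fun side _ _ _ =>
      sideIndicator_eq_of_lt side)
    (by rw [List.length_map, hlen, hS])
  have hfalse : List.count true (false :: false :: word) = a := by simp [hcount]
  have htrue : List.count true (true :: true :: word) = a + 2 := by simp [hcount]
  have hmix : List.count true (true :: false :: word) = a + 1 := by simp [hcount]
  rw [hmixed, hmixed, hmixed, hfalse, htrue, hmix, mul_comm] at hle
  exact_mod_cast hle

end LogConcavity

/-- Stanley's inequality: for a finite poset on `n` elements, an element `x`,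
and `1 < k < n`, the number `N(k)` of linear extensions `ρ` with `ρ(x) = k`
(in 1-based indexing) satisfies `N(k)^2 ≥ N(k-1) * N(k+1)`. -/
theorem stanley_log_concave (X : Type) [Fintype X] [PartialOrder X] (x : X) (k : ℕ)
    (hk1 : 1 < k) (hk2 : k < Fintype.card X) :
    Nat.card {ρ : X ≃ Fin (Fintype.card X) //
        (∀ a b : X, a < b → ρ a < ρ b) ∧ (ρ x).val + 1 = k - 1} *
      Nat.card {ρ : X ≃ Fin (Fintype.card X) //
        (∀ a b : X, a < b → ρ a < ρ b) ∧ (ρ x).val + 1 = k + 1} ≤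
    (Nat.card {ρ : X ≃ Fin (Fintype.card X) //
        (∀ a b : X, a < b → ρ a < ρ b) ∧ (ρ x).val + 1 = k}) ^ 2 := by
  classical
  obtain ⟨a, rfl⟩ : ∃ a, k = a + 2 := Nat.exists_eq_add_of_le' hk1
  have hsucc : a + 2 - 1 = a + 1 := rfl
  have hcard : (Finset.univ.erase x).card = a + (Fintype.card X - (a + 3)) + 2 := by
    rw [Finset.card_erase_of_mem (Finset.mem_univ x), Finset.card_univ]
    omega
  simp only [hsucc, add_left_inj, card_linearExtension_eq_linExtCount]
  exact linExtCount_mul_le_sq (Finset.notMem_erase x _) hcard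
end

section
/- The number of standard Young tableaux of shape λ ⊢ n equals n! divided by the product of the hook lengths of all cells of λ: f^λ = n!/∏_{(i,j)∈λ} h_λ(i,j). -/
/-- The number of standard Young tableaux of shape `μ`: bijective fillings of the
cells of `μ` by `0, …, n-1` that strictly increase along rows and columns. -/
noncomputable def sytCard (μ : YoungDiagram) : ℕ :=
  Nat.card {T : {c : ℕ × ℕ // c ∈ μ} ≃ Fin μ.card //
    ∀ c d : {c : ℕ × ℕ // c ∈ μ},
      ((c.1.1 = d.1.1 ∧ c.1.2 < d.1.2) ∨ (c.1.2 = d.1.2 ∧ c.1.1 < d.1.1)) → T c < T d}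

/-!
The largest entry of a standard tableau sits in a corner, so `f^μ = ∑ f^(μ ∖ c)` over the corners
`c`, and it suffices that the hook products `H` satisfy `∑ H(μ) / H(μ ∖ c) = n`.

Let `β₀ > ⋯ > βₖ₋₁` be the beta numbers of `μ`, so that `∑ βᵢ = n + (k choose 2)`. The hook lengths
in row `i`, together with the differences `βᵢ - βₐ` for `a > i`, are exactly `1, …, βᵢ`; hence
`H(μ) ∏_{i < a} (βᵢ - βₐ) = ∏ βᵢ!`. Removing the corner in row `i` lowers `βᵢ` by one, so
`H(μ) / H(μ ∖ c) = βᵢ Lᵢ(βᵢ - 1)`, where `Lᵢ` is the Lagrange basis polynomial at the nodes `β`.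
This expression vanishes for rows without a corner. Summed over all rows it gives, by Lagrange
interpolation, minus the top coefficient of the remainder of `X N(X - 1)` modulo `N = ∏ (X - βᵢ)`,
which is `∑ βᵢ - (k choose 2) = n`.
-/

open Finset Function

theorem eval_lagrangeBasis {ι F : Type*} [DecidableEq ι] [Field F] (s : Finset ι) (x : ι → F)
    (i : ι) (y : F) :
    (Lagrange.basis s x i).eval y =
      (∏ j ∈ s.erase i, (y - x j)) / ∏ j ∈ s.erase i, (x i - x j) := by
  simp [Lagrange.basis, Lagrange.basisDivisor, Polynomial.eval_prod, div_eq_inv_mul,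
    prod_mul_distrib]

section VandermondeProd

variable {ι R F : Type*} [LinearOrder ι] [CommRing R] [Field F]

/-- The Vandermonde product of the sequence `x` over the index set `s`, with the sign convention
that makes it positive for strictly decreasing real sequences. -/
def vandermondeProd (s : Finset ι) (x : ι → R) : R :=
  ∏ i ∈ s, ∏ j ∈ s with i < j, (x i - x j)

theorem vandermondeProd_congr {s : Finset ι} {x y : ι → R} (h : ∀ i ∈ s, x i = y i) :
    vandermondeProd s x = vandermondeProd s y :=
  prod_congr rfl fun i hi ↦ prod_congr rfl fun j hj ↦ by rw [h i hi, h j (mem_of_mem_filter j hj)]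

theorem vandermondeProd_insert {s : Finset ι} {i : ι} (hi : i ∉ s) (x : ι → R) :
    vandermondeProd (insert i s) x =
      (-1) ^ #{j ∈ s | j < i} * vandermondeProd s x * ∏ j ∈ s, (x i - x j) := by
  have sign : (-1 : R) ^ #{j ∈ s | j < i} = ∏ j ∈ s, if j < i then -1 else 1 := by
    rw [← prod_filter, prod_const]
  have pairs_with_i : (∏ j ∈ s, if i < j then x i - x j else 1) *
      ∏ j ∈ s, (if j < i then x j - x i else 1) =
        (-1) ^ #{j ∈ s | j < i} * ∏ j ∈ s, (x i - x j) := by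
    rw [sign, ← prod_mul_distrib, ← prod_mul_distrib]
    refine prod_congr rfl fun j hj ↦ ?_
    rcases lt_trichotomy i j with h | rfl | h
    · simp [h, h.not_gt]
    · exact absurd hj hi
    · simp [h, h.not_gt]
  simp only [vandermondeProd, prod_filter, prod_insert hi, lt_irrefl, if_false, one_mul,
    prod_mul_distrib]
  linear_combination (∏ i ∈ s, ∏ j ∈ s, if i < j then x i - x j else 1) * pairs_with_i

theorem vandermondeProd_ne_zero [NoZeroDivisors R] [Nontrivial R] {s : Finset ι} {x : ι → R}
    (hx : Set.InjOn x s) : vandermondeProd s x ≠ 0 :=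
  prod_ne_zero_iff.2 fun _ hi ↦ prod_ne_zero_iff.2 fun _ hj ↦ sub_ne_zero.2 <|
    hx.ne hi (mem_filter.1 hj).1 (mem_filter.1 hj).2.ne

theorem vandermondeProd_update {s : Finset ι} {x : ι → F} (hx : Set.InjOn x s) {i : ι}
    (hi : i ∈ s) (y : F) :
    vandermondeProd s (update x i y) = vandermondeProd s x * (Lagrange.basis s x i).eval y := by
  have hne : ∏ j ∈ s.erase i, (x i - x j) ≠ 0 := prod_ne_zero_iff.2 fun j hj ↦
    sub_ne_zero.2 <| hx.ne hi (mem_of_mem_erase hj) (ne_of_mem_erase hj).symm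
  have hupd : ∀ j ∈ s.erase i, update x i y j = x j := fun j hj ↦
    update_of_ne (ne_of_mem_erase hj) _ _
  rw [eval_lagrangeBasis, ← insert_erase hi, vandermondeProd_insert (notMem_erase i s),
    vandermondeProd_insert (notMem_erase i s), insert_erase hi, vandermondeProd_congr hupd,
    update_self, prod_congr rfl fun j hj ↦ by rw [hupd j hj]]
  field_simp

end VandermondeProd

section ShiftRemainder

open Polynomial Lagrange

variable {ι R F : Type*} [CommRing R] [Field F]

/-- The remainder of `X * N(X - 1)` modulo the nodal polynomial `N` with roots `v i`, `i ∈ s`;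
`N(X - 1)` is encoded as the nodal polynomial of the shifted nodes. -/
noncomputable def shiftRemainder (s : Finset ι) (v : ι → R) : R[X] :=
  X * nodal s (v + 1) - (X - C (#s : R)) * nodal s v

theorem shiftRemainder_insert [DecidableEq ι] {s : Finset ι} {a : ι} (ha : a ∉ s) (v : ι → R) :
    shiftRemainder (insert a s) v =
      (X - C (v a + 1)) * shiftRemainder s v + C (#s - v a) * nodal s v := by
  simp only [shiftRemainder, nodal_insert_eq_nodal ha, card_insert_of_notMem ha, Pi.add_apply,
    Pi.one_apply, map_add, map_sub, Nat.cast_add, Nat.cast_one, map_one]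
  ring

theorem degree_shiftRemainder_lt (s : Finset ι) (v : ι → R) :
    (shiftRemainder s v).degree < #s := by
  classical
  nontriviality R
  induction s using Finset.induction_on with
  | empty => simp [shiftRemainder]
  | insert a s ha ih =>
    have hs : (#s : WithBot ℕ) < #s + 1 := by exact_mod_cast Nat.lt_succ_self #s
    rw [shiftRemainder_insert ha, card_insert_of_notMem ha, Nat.cast_add, Nat.cast_one]
    refine (degree_add_le _ _).trans_lt (max_lt ?_ ?_)
    · rw [mul_comm, (monic_X_sub_C _).degree_mul, degree_X_sub_C]
      exact WithBot.add_lt_add_right WithBot.one_ne_bot ih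
    · rw [C_mul']
      exact (degree_smul_le _ _).trans_lt (degree_nodal.trans_lt hs)

theorem coeff_shiftRemainder (s : Finset ι) (v : ι → R) :
    (shiftRemainder s v).coeff (#s - 1) = (#s).choose 2 - ∑ i ∈ s, v i := by
  classical
  nontriviality R
  induction s using Finset.induction_on with
  | empty => simp [shiftRemainder]
  | insert a s ha ih =>
    have hcard : (shiftRemainder s v).coeff #s = 0 :=
      coeff_eq_zero_of_degree_lt (degree_shiftRemainder_lt s v)
    have hX : (X * shiftRemainder s v).coeff #s = (shiftRemainder s v).coeff (#s - 1) := by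
      rcases s.eq_empty_or_nonempty with rfl | hs
      · simp [shiftRemainder]
      · rw [← Nat.succ_pred_eq_of_pos hs.card_pos, coeff_X_mul, Nat.succ_eq_add_one,
          Nat.add_sub_cancel]
    have hnodal : (nodal s v).coeff #s = 1 := by
      simpa [leadingCoeff] using (nodal_monic (s := s) (v := v)).leadingCoeff
    rw [shiftRemainder_insert ha, card_insert_of_notMem ha, sum_insert ha, Nat.add_sub_cancel,
      coeff_add, sub_mul, coeff_sub, coeff_C_mul, coeff_C_mul, hX, ih, hcard, hnodal,
      Nat.choose_succ_succ' _ 1, Nat.choose_one_right]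
    push_cast
    ring

theorem eval_shiftRemainder [DecidableEq ι] {s : Finset ι} {i : ι} (hi : i ∈ s) (v : ι → R) :
    (shiftRemainder s v).eval (v i) = -(v i * ∏ j ∈ s.erase i, (v i - 1 - v j)) := by
  rw [shiftRemainder, eval_sub, eval_mul, eval_mul, eval_nodal_at_node hi, eval_nodal,
    ← mul_prod_erase s _ hi, prod_congr rfl fun j _ ↦ show v i - (v + 1) j = v i - 1 - v j by
      simp only [Pi.add_apply, Pi.one_apply]; ring]
  simp

theorem sum_mul_eval_basis_sub_one [DecidableEq ι] {s : Finset ι} {v : ι → F}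
    (hv : Set.InjOn v s) :
    ∑ i ∈ s, v i * (Lagrange.basis s v i).eval (v i - 1) = ∑ i ∈ s, v i - (#s).choose 2 := by
  have hcoeff := Lagrange.coeff_eq_sum hv (degree_shiftRemainder_lt s v)
  rw [coeff_shiftRemainder] at hcoeff
  rw [← neg_sub, hcoeff, ← sum_neg_distrib]
  refine sum_congr rfl fun i hi ↦ ?_
  rw [eval_shiftRemainder hi, eval_lagrangeBasis, neg_div, neg_neg, mul_div_assoc]

end ShiftRemainder

section LinExt

variable {α : Type*} [PartialOrder α] {s : Finset α} {a : α} {f : α → ℕ}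

/-- The linear extensions of the finite poset `s`: bijective strictly monotone labellings of `s` by
`0, …, #s - 1`. They are encoded as functions on the ambient type vanishing off `s`, so that
labellings of different subsets can be compared. -/
def linExt (s : Finset α) : Set (α → ℕ) :=
  {f | Set.BijOn f s (Set.Iio #s) ∧ StrictMonoOn f s ∧ ∀ a ∉ s, f a = 0}

open scoped Classical in
/-- Strictly monotone bijections `s ≃ Fin #s` correspond to linear extensions of `s` by extending
them by zero. -/
noncomputable def equivLinExt (s : Finset α) : {T : s ≃ Fin #s // StrictMono T} ≃ linExt s where
  toFun T := by
    refine ⟨fun a ↦ if h : a ∈ s then T.1 ⟨a, h⟩ else 0, ⟨fun a ha ↦ ?_, fun a ha b hb hab ↦ ?_,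
      fun n hn ↦ ?_⟩, fun a ha b hb hab ↦ ?_, fun a ha ↦ dif_neg ha⟩
    · simp [mem_coe.1 ha]
    · simpa [mem_coe.1 ha, mem_coe.1 hb, Fin.val_inj] using hab
    · exact ⟨T.1.symm ⟨n, hn⟩, (T.1.symm ⟨n, hn⟩).2, by simp⟩
    · simpa [mem_coe.1 ha, mem_coe.1 hb] using T.2 (Subtype.mk_lt_mk.2 hab)
  invFun f := ⟨(f.2.1.equiv f.1).trans Fin.equivSubtype.symm, fun a b hab ↦ f.2.2.1 a.2 b.2 hab⟩
  left_inv T := by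
    ext a
    exact dif_pos a.2
  right_inv f := by
    ext a
    by_cases ha : a ∈ s
    · exact dif_pos ha
    · exact (dif_neg ha).trans (f.2.2.2 a ha).symm

theorem finite_linExt (s : Finset α) : (linExt s).Finite :=
  Finite.of_equiv _ (equivLinExt s)

theorem linExt_empty : linExt (∅ : Finset α) = {0} := by
  ext f
  simp [linExt, funext_iff, StrictMonoOn]

theorem maximal_of_mem_linExt (hf : f ∈ linExt s) (ha : a ∈ s) (hfa : f a + 1 = #s) :
    Maximal (· ∈ s) a := by
  refine ⟨ha, fun b hb hab ↦ ?_⟩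
  by_contra hba
  have hlt : f a < f b := hf.2.1 ha hb (lt_of_le_not_ge hab hba)
  have hle : f b < #s := hf.1.mapsTo hb
  lia

theorem exists_mem_linExt_apply_add_one_eq (hs : s.Nonempty) (hf : f ∈ linExt s) :
    ∃ a ∈ s, f a + 1 = #s := by
  obtain ⟨a, ha, hfa⟩ := hf.1.surjOn (Nat.pred_lt hs.card_ne_zero)
  exact ⟨a, ha, by rw [hfa]; exact Nat.succ_pred hs.card_ne_zero⟩

variable [DecidableEq α]

theorem mem_linExt_insert_iff (ha : a ∉ s) (hmax : Maximal (· ∈ insert a s) a) (hfa : f a = #s) :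
    f ∈ linExt (insert a s) ↔ update f a 0 ∈ linExt s := by
  have heq : Set.EqOn f (update f a 0) s := fun b hb ↦
    (update_of_ne (ne_of_mem_of_not_mem (mem_coe.1 hb) ha) _ _).symm
  have hbij : Set.BijOn f ↑(insert a s) (Set.Iio #(insert a s)) ↔
      Set.BijOn (update f a 0) s (Set.Iio #s) := by
    rw [coe_insert, card_insert_of_notMem ha, Set.Iio_add_one_eq_Iic, ← Set.Iio_insert, ← hfa,
      Set.BijOn.insert_iff (by simpa) (by simp), heq.bijOn_iff]
  have hmono (h : Set.MapsTo f s (Set.Iio #s)) :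
      StrictMonoOn f ↑(insert a s) ↔ StrictMonoOn (update f a 0) s := by
    refine ⟨fun hf ↦ (hf.mono (by simp)).congr heq, fun hf b hb c hc hbc ↦ ?_⟩
    have hba : b ≠ a := by rintro rfl; exact hmax.not_gt hc hbc
    have hbs : b ∈ s := mem_of_mem_insert_of_ne hb hba
    rcases mem_insert.1 hc with rfl | hcs
    · exact hfa ▸ h hbs
    · exact hf.congr heq.symm hbs hcs hbc
  have hzero : (∀ b ∉ insert a s, f b = 0) ↔ ∀ b ∉ s, update f a 0 b = 0 := by
    grind
  constructor
  · rintro ⟨h₁, h₂, h₃⟩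
    have h₁' := hbij.1 h₁
    exact ⟨h₁', (hmono (h₁'.congr heq.symm).mapsTo).1 h₂, hzero.1 h₃⟩
  · rintro ⟨h₁, h₂, h₃⟩
    exact ⟨hbij.2 h₁, (hmono (h₁.congr heq.symm).mapsTo).2 h₂, hzero.2 h₃⟩

theorem bijOn_update_linExt (ha : a ∉ s) (hmax : Maximal (· ∈ insert a s) a) :
    Set.BijOn (update · a 0) {f ∈ linExt (insert a s) | f a = #s} (linExt s) := by
  have hupd {g : α → ℕ} (hg : g ∈ linExt s) : update (update g a #s) a 0 = g := by
    rw [update_idem, ← hg.2.2 a ha, update_eq_self]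
  refine Set.InvOn.bijOn (f' := (update · a #s)) ⟨?_, fun g hg ↦ hupd hg⟩ ?_ ?_
  · rintro f ⟨-, hfa⟩
    simp [← hfa]
  · rintro f ⟨hf, hfa⟩
    exact (mem_linExt_insert_iff ha hmax hfa).1 hf
  · intro g hg
    refine ⟨(mem_linExt_insert_iff ha hmax (update_self ..)).2 ?_, update_self ..⟩
    rwa [hupd hg]

open scoped Classical in
theorem ncard_linExt (hs : s.Nonempty) :
    (linExt s).ncard = ∑ a ∈ s with Maximal (· ∈ s) a, (linExt (s.erase a)).ncard := by
  let lastAt a : Set (α → ℕ) := {f ∈ linExt s | f a + 1 = #s}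
  have hunion : linExt s = ⋃ a ∈ (↑{a ∈ s | Maximal (· ∈ s) a} : Set α), lastAt a := by
    ext f
    simp only [Set.mem_iUnion, mem_coe, mem_filter, lastAt, exists_prop]
    refine ⟨fun hf ↦ ?_, fun ⟨_, _, hf, _⟩ ↦ hf⟩
    obtain ⟨a, ha, hfa⟩ := exists_mem_linExt_apply_add_one_eq hs hf
    exact ⟨a, ⟨ha, maximal_of_mem_linExt hf ha hfa⟩, hf, hfa⟩
  rw [hunion, (finite_toSet _).ncard_biUnion, finsum_mem_coe_finset]
  · refine sum_congr rfl fun a ha ↦ ?_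
    obtain ⟨ha, hmax⟩ := mem_filter.1 ha
    rw [← insert_erase ha] at hmax
    rw [← (bijOn_update_linExt (notMem_erase a s) hmax).ncard_eq, insert_erase ha]
    simp only [lastAt, ← card_erase_add_one ha, Nat.add_right_cancel_iff]
  · exact fun _ _ ↦ (finite_linExt s).subset fun _ hf ↦ hf.1
  · intro a ha b hb hab
    rw [Function.onFun, Set.disjoint_left]
    rintro f ⟨hf, hfa⟩ ⟨-, hfb⟩
    exact hab <| hf.1.injOn (mem_filter.1 ha).1 (mem_filter.1 hb).1 <|
      Nat.succ_injective (hfa.trans hfb.symm)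

end LinExt

section Corner

variable {μ : YoungDiagram} {c : ℕ × ℕ}

theorem forall_row_col_lt_iff_strictMono {β : Type*} [Preorder β] {T : {c : ℕ × ℕ // c ∈ μ} → β} :
    (∀ c d : {c : ℕ × ℕ // c ∈ μ},
      ((c.1.1 = d.1.1 ∧ c.1.2 < d.1.2) ∨ (c.1.2 = d.1.2 ∧ c.1.1 < d.1.1)) → T c < T d) ↔
      StrictMono T := by
  refine ⟨fun h ↦ ?_, fun h c d hcd ↦ h ?_⟩
  · rintro ⟨⟨i, j⟩, hc⟩ ⟨⟨i', j'⟩, hd⟩ hlt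
    rcases Prod.lt_iff.1 (Subtype.mk_lt_mk.1 hlt) with ⟨hi, hj⟩ | ⟨hi, hj⟩
    all_goals dsimp only at hi hj
    · have hcorner : (i', j) ∈ μ := μ.up_left_mem le_rfl hj hd
      have hcol : T ⟨(i, j), hc⟩ < T ⟨(i', j), hcorner⟩ := h _ _ (.inr ⟨rfl, hi⟩)
      rcases hj.eq_or_lt with rfl | hj
      · exact hcol
      · exact hcol.trans <| h _ _ (.inl ⟨rfl, hj⟩)
    · have hcorner : (i, j') ∈ μ := μ.up_left_mem hi le_rfl hd
      have hrow : T ⟨(i, j), hc⟩ < T ⟨(i, j'), hcorner⟩ := h _ _ (.inl ⟨rfl, hj⟩)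
      rcases hi.eq_or_lt with rfl | hi
      · exact hrow
      · exact hrow.trans <| h _ _ (.inr ⟨rfl, hi⟩)
  · rw [← Subtype.coe_lt_coe, Prod.lt_iff]
    grind

theorem sytCard_eq_ncard_linExt (μ : YoungDiagram) : sytCard μ = (linExt μ.cells).ncard := by
  rw [sytCard, ← Nat.card_coe_set_eq, ← Nat.card_congr (equivLinExt μ.cells)]
  simp_rw [forall_row_col_lt_iff_strictMono]
  rfl

/-- The Young diagram obtained by removing the corner `c`; corners are the maximal cells. -/
def eraseCorner (μ : YoungDiagram) (hc : Maximal (· ∈ μ.cells) c) : YoungDiagram where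
  cells := μ.cells.erase c
  isLowerSet := by
    rw [coe_erase]
    exact μ.isLowerSet.erase fun d hd hcd ↦ hc.eq_of_ge hd hcd

theorem maximal_mem_cells_iff {i j : ℕ} :
    Maximal (· ∈ μ.cells) (i, j) ↔ j + 1 = μ.rowLen i ∧ μ.rowLen (i + 1) < μ.rowLen i := by
  constructor
  · intro h
    have hmem := YoungDiagram.mem_iff_lt_rowLen.1 (μ.mem_cells _ |>.1 h.prop)
    have hright : (i, j + 1) ∉ μ := fun h' ↦ by simpa using h.le_of_ge h' (by simp)
    have hdown : (i + 1, j) ∉ μ := fun h' ↦ by simpa using h.le_of_ge h' (by simp)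
    rw [YoungDiagram.mem_iff_lt_rowLen] at hright hdown
    lia
  · rintro ⟨hj, hi⟩
    refine ⟨YoungDiagram.mem_iff_lt_rowLen.2 (by lia), ?_⟩
    rintro ⟨i', j'⟩ hd ⟨hi', hj'⟩
    have hd := YoungDiagram.mem_iff_lt_rowLen.1 (μ.mem_cells _ |>.1 hd)
    have hanti := μ.rowLen_anti (i + 1) i'
    dsimp only at hi' hj'
    obtain rfl : i' = i := by lia
    exact ⟨le_rfl, by dsimp only; lia⟩

variable (hc : Maximal (· ∈ μ.cells) c)

theorem cells_eraseCorner : (eraseCorner μ hc).cells = μ.cells.erase c :=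
  rfl

theorem card_eraseCorner_add_one : (eraseCorner μ hc).card + 1 = μ.card :=
  card_erase_add_one hc.prop

theorem rowLen_eraseCorner :
    (eraseCorner μ hc).rowLen = update μ.rowLen c.1 (μ.rowLen c.1 - 1) := by
  obtain ⟨i, j⟩ := c
  have hj := (maximal_mem_cells_iff.1 hc).1
  funext a
  refine eq_of_forall_lt_iff fun b ↦ ?_
  rw [← YoungDiagram.mem_iff_lt_rowLen, ← YoungDiagram.mem_cells, cells_eraseCorner, mem_erase,
    YoungDiagram.mem_cells, YoungDiagram.mem_iff_lt_rowLen]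
  rcases eq_or_ne a i with rfl | ha
  · simp only [ne_eq, Prod.mk.injEq, true_and, update_self]
    lia
  · simp [ha]

theorem colLen_eraseCorner_le (j : ℕ) : (eraseCorner μ hc).colLen j ≤ μ.colLen j := by
  refine le_of_forall_lt fun i hi ↦ ?_
  rw [← YoungDiagram.mem_iff_lt_colLen] at hi ⊢
  exact mem_of_mem_erase hi

end Corner

section Beta

/-- The hook length of the cell `c`, in 0-based coordinates. The truncated subtraction is harmless
when `c ∈ μ`. -/
def hookLength (μ : YoungDiagram) (c : ℕ × ℕ) : ℕ :=
  μ.rowLen c.1 + μ.colLen c.2 - c.1 - c.2 - 1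

/-- The product of the hook lengths of all cells of `μ`. -/
def hookProd (μ : YoungDiagram) : ℕ :=
  ∏ c ∈ μ.cells, hookLength μ c

/-- The beta numbers of `μ`, regarded as a partition into `k` parts: the first-column hook
lengths when `k` is the number of rows. -/
def betaNumber (μ : YoungDiagram) (k i : ℕ) : ℕ :=
  μ.rowLen i + (k - 1 - i)

/-- The numbers missed by `betaNumber μ k`: walking along the boundary of `μ` from the bottom left,
beta numbers are the positions of the vertical steps and gap numbers those of the horizontal
steps. -/
def gapNumber (μ : YoungDiagram) (k j : ℕ) : ℕ :=
  j + (k - μ.colLen j)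

variable {μ : YoungDiagram} {k i j : ℕ}

theorem betaNumber_strictAntiOn (μ : YoungDiagram) (k : ℕ) :
    StrictAntiOn (betaNumber μ k) (range k) := fun a _ b hb hab ↦ by
  have := μ.rowLen_anti a b hab.le
  have := mem_range.1 hb
  simp only [betaNumber]
  lia

theorem gapNumber_strictMono (μ : YoungDiagram) (k : ℕ) : StrictMono (gapNumber μ k) :=
  fun a b hab ↦ by
    have := μ.colLen_anti a b hab.le
    simp only [gapNumber]
    lia

theorem betaNumber_lt_gapNumber (hik : i < k) (h : (i, j) ∉ μ) :
    betaNumber μ k i < gapNumber μ k j := by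
  have hrow := mt YoungDiagram.mem_iff_lt_rowLen.2 h
  have hcol := mt YoungDiagram.mem_iff_lt_colLen.2 h
  simp only [betaNumber, gapNumber]
  lia

theorem betaNumber_sub_gapNumber (hk : μ.colLen 0 ≤ k) (h : (i, j) ∈ μ) :
    betaNumber μ k i - gapNumber μ k j = hookLength μ (i, j) := by
  have hrow := YoungDiagram.mem_iff_lt_rowLen.1 h
  have hcol := YoungDiagram.mem_iff_lt_colLen.1 h
  have := μ.colLen_anti 0 j j.zero_le
  simp only [betaNumber, gapNumber, hookLength]
  lia

theorem gapNumber_lt_betaNumber (hk : μ.colLen 0 ≤ k) (h : (i, j) ∈ μ) :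
    gapNumber μ k j < betaNumber μ k i := by
  have hrow := YoungDiagram.mem_iff_lt_rowLen.1 h
  have hcol := YoungDiagram.mem_iff_lt_colLen.1 h
  have := μ.colLen_anti 0 j j.zero_le
  simp only [betaNumber, gapNumber]
  lia

theorem gapNumber_ne_betaNumber (hk : μ.colLen 0 ≤ k) (hi : i < k) (j : ℕ) :
    gapNumber μ k j ≠ betaNumber μ k i := by
  by_cases h : (i, j) ∈ μ
  · exact (gapNumber_lt_betaNumber hk h).ne
  · exact (betaNumber_lt_gapNumber hi h).ne'

theorem prod_range_betaNumber {M : Type*} [CommMonoid M] (hk : μ.colLen 0 ≤ k) (hi : i < k)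
    (g : ℕ → M) :
    ∏ t ∈ range (betaNumber μ k i), g t =
      (∏ j ∈ range (μ.rowLen i), g (gapNumber μ k j)) * ∏ a ∈ Ioo i k, g (betaNumber μ k a) := by
  have hbeta : Set.InjOn (betaNumber μ k) (Ioo i k) :=
    (betaNumber_strictAntiOn μ k).injOn.mono fun a ha ↦ by simp_all
  have hdisj : Disjoint ((range (μ.rowLen i)).image (gapNumber μ k))
      ((Ioo i k).image (betaNumber μ k)) := by
    simp only [disjoint_left, mem_image, mem_Ioo]
    rintro _ ⟨j, -, rfl⟩ ⟨a, ha, heq⟩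
    exact gapNumber_ne_betaNumber hk ha.2 j heq.symm
  have hsub : (range (μ.rowLen i)).image (gapNumber μ k) ∪ (Ioo i k).image (betaNumber μ k) ⊆
      range (betaNumber μ k i) := by
    simp only [union_subset_iff, image_subset_iff, mem_range, mem_Ioo]
    exact ⟨fun j hj ↦ gapNumber_lt_betaNumber hk (YoungDiagram.mem_iff_lt_rowLen.2 hj),
      fun a ha ↦ betaNumber_strictAntiOn μ k (by simpa) (by simpa using ha.2) ha.1⟩
  have hcard : #(range (betaNumber μ k i)) ≤
      #((range (μ.rowLen i)).image (gapNumber μ k) ∪ (Ioo i k).image (betaNumber μ k)) := by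
    rw [card_union_of_disjoint hdisj,
      card_image_of_injective _ (gapNumber_strictMono μ k).injective, card_image_of_injOn hbeta,
      card_range, card_range, Nat.card_Ioo, betaNumber]
    lia
  rw [← eq_of_subset_of_card_le hsub hcard, prod_union hdisj,
    prod_image (gapNumber_strictMono μ k).injective.injOn, prod_image hbeta]

theorem prod_hookLength_row (hk : μ.colLen 0 ≤ k) (hi : i < k) :
    (∏ j ∈ range (μ.rowLen i), hookLength μ (i, j)) *
      ∏ a ∈ Ioo i k, (betaNumber μ k i - betaNumber μ k a) = (betaNumber μ k i).factorial := by
  rw [← Nat.descFactorial_self, Nat.descFactorial_eq_prod_range, prod_range_betaNumber hk hi]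
  congr 1
  exact prod_congr rfl fun j hj ↦ (betaNumber_sub_gapNumber hk <|
    YoungDiagram.mem_iff_lt_rowLen.2 <| mem_range.1 hj).symm

theorem mem_cells_iff_of_colLen_zero_le (hk : μ.colLen 0 ≤ k) (c : ℕ × ℕ) :
    c ∈ μ.cells ↔ c.1 ∈ range k ∧ c.2 ∈ range (μ.rowLen c.1) := by
  rw [mem_range, mem_range, ← YoungDiagram.mem_iff_lt_rowLen, YoungDiagram.mem_cells]
  refine ⟨fun h ↦ ⟨?_, h⟩, And.right⟩
  exact (YoungDiagram.mem_iff_lt_colLen.1 <| μ.up_left_mem le_rfl c.2.zero_le h).trans_le hk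

theorem hookProd_mul_vandermondeProd (hk : μ.colLen 0 ≤ k) :
    (hookProd μ : ℚ) * vandermondeProd (range k) (fun i ↦ (betaNumber μ k i : ℚ)) =
      ∏ i ∈ range k, ((betaNumber μ k i).factorial : ℚ) := by
  rw [hookProd, prod_finset_product _ (range k) (range <| μ.rowLen ·)
    (mem_cells_iff_of_colLen_zero_le hk), vandermondeProd, Nat.cast_prod, ← prod_mul_distrib]
  refine prod_congr rfl fun i hi ↦ ?_
  have hIoo : {a ∈ range k | i < a} = Ioo i k := by
    ext
    simp [and_comm]
  rw [hIoo, ← prod_hookLength_row hk (mem_range.1 hi), Nat.cast_mul, Nat.cast_prod _ (Ioo i k)]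
  congr 1
  refine prod_congr rfl fun a ha ↦ (Nat.cast_sub ?_).symm
  exact (betaNumber_strictAntiOn μ k hi (by simpa using (mem_Ioo.1 ha).2) (mem_Ioo.1 ha).1).le

theorem sum_betaNumber (hk : μ.colLen 0 ≤ k) :
    ∑ i ∈ range k, betaNumber μ k i = μ.card + k.choose 2 := by
  have hcard : μ.card = ∑ i ∈ range k, μ.rowLen i := by
    rw [YoungDiagram.card, card_eq_sum_ones,
      sum_finset_product _ (range k) (range <| μ.rowLen ·) (mem_cells_iff_of_colLen_zero_le hk)]
    simp
  simp only [betaNumber, sum_add_distrib]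
  rw [hcard, sum_range_reflect (fun i ↦ i), sum_range_id, Nat.choose_two_right]

end Beta

section CornerWeight

variable {μ : YoungDiagram} {c : ℕ × ℕ} {k i : ℕ}

/-- The ratio `H(μ) / H(μ ∖ c)` of hook products when row `i` of `μ` ends in a corner `c`, as an
expression in the beta numbers that makes sense for every row `i < k`; it vanishes for rows
without a corner. -/
noncomputable def cornerWeight (μ : YoungDiagram) (k i : ℕ) : ℚ :=
  betaNumber μ k i * (Lagrange.basis (range k) (fun a ↦ (betaNumber μ k a : ℚ)) i).eval
    (betaNumber μ k i - 1 : ℚ)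

theorem injOn_betaNumber (μ : YoungDiagram) (k : ℕ) :
    Set.InjOn (fun i ↦ (betaNumber μ k i : ℚ)) (range k) :=
  Nat.cast_injective.comp_injOn (betaNumber_strictAntiOn μ k).injOn

theorem sum_cornerWeight (hk : μ.colLen 0 ≤ k) :
    ∑ i ∈ range k, cornerWeight μ k i = μ.card := by
  have hsum := congrArg (Nat.cast : ℕ → ℚ) (sum_betaNumber hk)
  push_cast at hsum
  simp only [cornerWeight]
  rw [sum_mul_eval_basis_sub_one (injOn_betaNumber μ k), hsum, card_range, add_sub_cancel_right]

theorem cornerWeight_eq_zero (hk : μ.colLen 0 ≤ k) (hi : i < k)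
    (hrow : ∀ j, ¬ Maximal (· ∈ μ.cells) (i, j)) : cornerWeight μ k i = 0 := by
  have hnext : μ.rowLen (i + 1) = μ.rowLen i := by
    have hanti := μ.rowLen_anti i (i + 1) i.le_succ
    have hrow := hrow (μ.rowLen i - 1)
    rw [maximal_mem_cells_iff] at hrow
    lia
  rcases (Nat.succ_le_of_lt hi).eq_or_lt with rfl | hi'
  · have hlast : μ.rowLen (i + 1) = 0 := by
      by_contra h
      have hmem := YoungDiagram.mem_iff_lt_rowLen.2 (Nat.pos_of_ne_zero h)
      exact (YoungDiagram.mem_iff_lt_colLen.1 hmem).not_ge hk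
    simp [cornerWeight, betaNumber, ← hnext, hlast]
  · have hbeta : (betaNumber μ k i - 1 : ℚ) = betaNumber μ k (i + 1) := by
      rw [sub_eq_iff_eq_add]
      norm_cast
      simp only [betaNumber, hnext]
      lia
    rw [cornerWeight, hbeta]
    exact mul_eq_zero_of_right _ <|
      Lagrange.eval_basis_of_ne (v := (betaNumber μ k · : ℕ → ℚ)) i.succ_ne_self.symm
        (mem_range.2 hi')

theorem betaNumber_eraseCorner (hc : Maximal (· ∈ μ.cells) c) (k : ℕ) :
    betaNumber (eraseCorner μ hc) k = update (betaNumber μ k) c.1 (betaNumber μ k c.1 - 1) := by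
  have hpos : 1 ≤ μ.rowLen c.1 := (maximal_mem_cells_iff.1 hc).1 ▸ Nat.le_add_left 1 c.2
  funext i
  rcases eq_or_ne i c.1 with rfl | hi
  · simp only [betaNumber, rowLen_eraseCorner, update_self]
    lia
  · simp [betaNumber, rowLen_eraseCorner, hi]

theorem betaNumber_pos_of_maximal (hc : Maximal (· ∈ μ.cells) c) (k : ℕ) : 0 < betaNumber μ k c.1 :=
  Nat.add_pos_left ((maximal_mem_cells_iff.1 hc).1 ▸ c.2.succ_pos) _

theorem prod_factorial_betaNumber_eraseCorner (hc : Maximal (· ∈ μ.cells) c)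
    (hck : c.1 ∈ range k) :
    ∏ i ∈ range k, (betaNumber μ k i).factorial =
      betaNumber μ k c.1 * ∏ i ∈ range k, (betaNumber (eraseCorner μ hc) k i).factorial := by
  have hself : (betaNumber μ k c.1).factorial =
      betaNumber μ k c.1 * (betaNumber (eraseCorner μ hc) k c.1).factorial := by
    rw [betaNumber_eraseCorner, update_self,
      Nat.mul_factorial_pred (betaNumber_pos_of_maximal hc k).ne']
  have hne : ∀ i ∈ (range k).erase c.1,
      (betaNumber (eraseCorner μ hc) k i).factorial = (betaNumber μ k i).factorial :=
    fun i hi ↦ by rw [betaNumber_eraseCorner, update_of_ne (ne_of_mem_erase hi)]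
  rw [← mul_prod_erase _ _ hck, ← mul_prod_erase _ _ hck, hself, mul_assoc, prod_congr rfl hne]

theorem vandermondeProd_betaNumber_eraseCorner (hc : Maximal (· ∈ μ.cells) c)
    (hck : c.1 ∈ range k) :
    vandermondeProd (range k) (fun i ↦ (betaNumber (eraseCorner μ hc) k i : ℚ)) =
      vandermondeProd (range k) (fun i ↦ (betaNumber μ k i : ℚ)) *
        (Lagrange.basis (range k) (fun i ↦ (betaNumber μ k i : ℚ)) c.1).eval
          (betaNumber μ k c.1 - 1 : ℚ) := by
  rw [← vandermondeProd_update (injOn_betaNumber μ k) hck, betaNumber_eraseCorner]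
  congr 1
  rw [← Nat.cast_pred (betaNumber_pos_of_maximal hc k)]
  exact comp_update Nat.cast _ _ _

theorem hookProd_eq_hookProd_eraseCorner_mul (hk : μ.colLen 0 ≤ k)
    (hc : Maximal (· ∈ μ.cells) c) :
    (hookProd μ : ℚ) = hookProd (eraseCorner μ hc) * cornerWeight μ k c.1 := by
  have hck : c.1 ∈ range k := ((mem_cells_iff_of_colLen_zero_le hk c).1 hc.prop).1
  refine mul_right_cancel₀ (vandermondeProd_ne_zero (injOn_betaNumber μ k)) ?_
  have hfrob := hookProd_mul_vandermondeProd ((colLen_eraseCorner_le hc 0).trans hk)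
  have hfact := congrArg (Nat.cast : ℕ → ℚ) (prod_factorial_betaNumber_eraseCorner hc hck)
  push_cast at hfact
  rw [vandermondeProd_betaNumber_eraseCorner hc hck] at hfrob
  rw [hookProd_mul_vandermondeProd hk, hfact, ← hfrob, cornerWeight]
  ring

open scoped Classical in
theorem sum_corners_cornerWeight (hk : μ.colLen 0 ≤ k) :
    ∑ c ∈ μ.cells with Maximal (· ∈ μ.cells) c, cornerWeight μ k c.1 = μ.card := by
  rw [← sum_cornerWeight hk]
  refine sum_of_injOn Prod.fst ?_ ?_ ?_ fun _ _ ↦ rfl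
  · rintro ⟨i, j⟩ hc ⟨i', j'⟩ hd (rfl : i = i')
    have hj := (maximal_mem_cells_iff.1 (mem_filter.1 hc).2).1
    have hj' := (maximal_mem_cells_iff.1 (mem_filter.1 hd).2).1
    grind
  · exact fun c hc ↦ ((mem_cells_iff_of_colLen_zero_le hk c).1 (mem_filter.1 hc).1).1
  · exact fun i hi hrow ↦ cornerWeight_eq_zero hk (mem_range.1 hi) fun j hc ↦
      hrow ⟨(i, j), by simpa using ⟨hc.prop, hc⟩, rfl⟩

end CornerWeight

theorem ncard_linExt_mul_hookProd (μ : YoungDiagram) :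
    (linExt μ.cells).ncard * hookProd μ = μ.card.factorial := by
  classical
  induction hn : μ.card generalizing μ with
  | zero =>
    have hμ : μ.cells = ∅ := card_eq_zero.1 hn
    simp [hμ, linExt_empty, hookProd]
  | succ n ih =>
    have hne : μ.cells.Nonempty := card_pos.1 (n.succ_pos.trans_eq hn.symm)
    have hcorner {c} (hc : Maximal (· ∈ μ.cells) c) :
        ((linExt (μ.cells.erase c)).ncard : ℚ) * hookProd μ =
          cornerWeight μ (μ.colLen 0) c.1 * n.factorial := by
      have hcard := Nat.add_right_cancel ((card_eraseCorner_add_one hc).trans hn)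
      rw [hookProd_eq_hookProd_eraseCorner_mul le_rfl hc, ← ih _ hcard, Nat.cast_mul,
        cells_eraseCorner]
      ring
    rw [← Nat.cast_inj (R := ℚ), ncard_linExt hne, Nat.factorial_succ, ← hn, Nat.cast_mul,
      Nat.cast_mul, ← sum_corners_cornerWeight le_rfl, Nat.cast_sum, sum_mul, sum_mul]
    exact sum_congr rfl fun c hc ↦ hcorner (mem_filter.1 hc).2

/-- The hook-length formula: `f^λ = n! / ∏_{(i,j) ∈ λ} h_λ(i,j)`, where in 0-based
coordinates the hook length of cell `(i,j)` is `rowLen i + colLen j - i - j - 1`. -/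
theorem hook_length_formula (μ : YoungDiagram) :
    sytCard μ =
      Nat.factorial μ.card /
        ∏ c ∈ μ.cells, (μ.rowLen c.1 + μ.colLen c.2 - c.1 - c.2 - 1) := by
  have hmul : sytCard μ * hookProd μ = μ.card.factorial := by
    rw [sytCard_eq_ncard_linExt, ncard_linExt_mul_hookProd]
  have hpos : 0 < hookProd μ :=
    Nat.pos_of_ne_zero <| right_ne_zero_of_mul <| hmul ▸ μ.card.factorial_ne_zero
  exact Nat.eq_div_of_mul_eq_left hpos.ne' hmul
end

section
/- For partitions λ, μ, ν of n, if μ majorizes ν then the Kostka number K_{λμ} is at most K_{λν}. -/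
open scoped Classical in
/-- The Kostka number `K_{λμ}`: the number of semistandard Young tableaux of
shape `λ` whose content is `μ`, i.e. with exactly `μ v` entries equal to `v`
for every value `v`. -/
noncomputable def kostka (lam : YoungDiagram) (mu : ℕ → ℕ) : ℕ :=
  Nat.card {T : SemistandardYoungTableau lam //
    ∀ v : ℕ, (lam.cells.filter (fun c => T c.1 c.2 = v)).card = mu v}

/-!
If `c (a + 1) < c a`, the crystal lowering operator of index `a` embeds the tableaux of content `c`
into those of content `c - e_a + e_{a + 1}`. Let `height k` be the number of entries `a` minus the
number of entries `a + 1` in the first `k` columns. The operator turns an `a` into `a + 1` in the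
column where `height` climbs to its first maximum, a positive value. This decreases `height` by `2`
to the right of that column, so the same column is the one just after the last maximum of the new
`height`; hence it can be recovered and the operator is injective.

If `μ` majorizes the partition `ν`, it is turned into `ν` by such unit transfers: with `a + 1` the
first maximum of the differences `(μ_0 + ⋯ + μ_{k-1}) - (ν_0 + ⋯ + ν_{k-1})`, one has
`μ_{a+1} ≤ ν_{a+1} ≤ ν_a < μ_a`, and the transfer from `a` to `a + 1` lowers the difference at
`k = a + 1` by `1` and changes no other.
-/

namespace Kostka

open Finset

section Extrema

variable {α β : Type*}

/-- `m` is the first point at which `f` attains its maximum. -/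
structure IsFirstMax [LT α] [Preorder β] (f : α → β) (m : α) : Prop where
  le (k : α) : f k ≤ f m
  lt {k : α} (hk : k < m) : f k < f m

/-- `m` is the last point at which `f` attains its maximum. -/
structure IsLastMax [LT α] [Preorder β] (f : α → β) (m : α) : Prop where
  le (k : α) : f k ≤ f m
  lt {k : α} (hk : m < k) : f k < f m

lemma IsLastMax.eq [LinearOrder α] [Preorder β] {f : α → β} {m m' : α} (h : IsLastMax f m)
    (h' : IsLastMax f m') : m = m' := by
  rcases lt_trichotomy m m' with hlt | heq | hgt
  · exact absurd (h.lt hlt) (h'.le m).not_gt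
  · exact heq
  · exact absurd (h'.lt hgt) (h.le m').not_gt

lemma exists_isFirstMax [LinearOrder β] {f : ℕ → β} {N : ℕ} (hN : ∀ k, N ≤ k → f k ≤ f N) :
    ∃ m, IsFirstMax f m := by
  classical
  have hmax : ∃ m, ∀ k, f k ≤ f m := by
    obtain ⟨m, -, hm⟩ := (range (N + 1)).exists_max_image f nonempty_range_add_one
    refine ⟨m, fun k => ?_⟩
    rcases le_total N k with hk | hk
    · exact (hN k hk).trans (hm N (by simp))
    · exact hm k (by simpa using Nat.lt_succ_of_le hk)
  refine ⟨Nat.find hmax, Nat.find_spec hmax, fun {k} hk => ?_⟩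
  obtain ⟨l, hl⟩ := not_forall.1 (Nat.find_min hmax hk)
  exact (not_le.1 hl).trans_le (Nat.find_spec hmax l)

lemma IsFirstMax.isLastMax_sub_two {f : ℕ → ℤ} {j : ℕ} (h : IsFirstMax f (j + 1))
    (hj : f (j + 1) = f j + 1) : IsLastMax (fun k => f k - if j < k then 2 else 0) j where
  le k := by
    rcases le_or_gt k j with hk | hk
    · have := h.lt (Nat.lt_succ_of_le hk)
      simp only [hk.not_gt, lt_irrefl, if_false]
      omega
    · have := h.le k
      simp only [hk, lt_irrefl, if_true, if_false]
      omega
  lt {k} hk := by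
    have := h.le k
    simp only [hk, lt_irrefl, if_true, if_false]
    omega

end Extrema

section Excess

variable {f g : ℕ → ℕ}

/-- The excess of the sum of the first `k` terms of `f` over that of `g`. It measures both the
majorization of content vectors and the imbalance between two values in the first `k` columns of
a tableau. -/
def excess (f g : ℕ → ℕ) (k : ℕ) : ℤ :=
  (∑ j ∈ range k, f j : ℕ) - (∑ j ∈ range k, g j : ℕ)

lemma excess_zero (f g : ℕ → ℕ) : excess f g 0 = 0 := by
  simp [excess]

lemma excess_succ (f g : ℕ → ℕ) (k : ℕ) : excess f g (k + 1) = excess f g k + f k - g k := by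
  simp only [excess, sum_range_succ]
  push_cast
  ring

lemma excess_nonneg_iff {k : ℕ} :
    0 ≤ excess f g k ↔ ∑ j ∈ range k, g j ≤ ∑ j ∈ range k, f j := by
  rw [excess, sub_nonneg, Nat.cast_le]

lemma excess_eq_zero_iff {k : ℕ} :
    excess f g k = 0 ↔ ∑ j ∈ range k, f j = ∑ j ∈ range k, g j := by
  rw [excess, sub_eq_zero, Nat.cast_inj]

lemma eq_of_excess_eq_zero (h : ∀ k, excess f g k = 0) : f = g := by
  funext k
  have hk := excess_succ f g k
  rw [h, h] at hk
  omega

lemma sum_range_add_single (f : ℕ → ℕ) (m k : ℕ) :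
    ∑ j ∈ range k, (f + Pi.single m 1 : ℕ → ℕ) j = ∑ j ∈ range k, f j + if m < k then 1 else 0 := by
  simp [sum_add_distrib]

lemma excess_add_single_left (f g : ℕ → ℕ) (m k : ℕ) :
    excess (f + Pi.single m 1) g k = excess f g k + if m < k then 1 else 0 := by
  rw [excess, sum_range_add_single, excess]
  push_cast
  ring

lemma excess_add_single_right (f g : ℕ → ℕ) (m k : ℕ) :
    excess f (g + Pi.single m 1) k = excess f g k - if m < k then 1 else 0 := by
  rw [excess, sum_range_add_single, excess]
  push_cast
  ring

lemma exists_isFirstMax_excess {N p : ℕ} (hN : ∀ k, N ≤ k → excess f g k = excess f g N)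
    (hp : 0 < excess f g p) : ∃ j, IsFirstMax (excess f g) (j + 1) := by
  obtain ⟨m, hm⟩ := exists_isFirstMax fun k hk => (hN k hk).le
  cases m with
  | zero => exact absurd (hm.le p) (by rwa [excess_zero, not_le])
  | succ j => exact ⟨j, hm⟩

lemma IsFirstMax.lt_of_excess {j : ℕ} (h : IsFirstMax (excess f g) (j + 1)) : g j < f j := by
  have hlt := h.lt j.lt_add_one
  rw [excess_succ] at hlt
  omega

lemma IsFirstMax.le_of_excess {j : ℕ} (h : IsFirstMax (excess f g) (j + 1)) :
    f (j + 1) ≤ g (j + 1) := by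
  have hle := h.le (j + 1 + 1)
  rw [excess_succ f g (j + 1)] at hle
  omega

end Excess

section Majorization

/-- `c'` arises from `c` by moving one unit from a position `a` to the position `a + 1`, where `c`
is strictly smaller. Stated without subtraction, as `c' + e_a = c + e_{a + 1}`. -/
def UnitTransfer (c c' : ℕ → ℕ) : Prop :=
  ∃ a, c (a + 1) < c a ∧ c' + Pi.single a 1 = c + Pi.single (a + 1) 1

variable {c nu : ℕ → ℕ} {N : ℕ}

lemma exists_add_single_eq {a : ℕ} (ha : 0 < c a) :
    ∃ c' : ℕ → ℕ, c' + Pi.single a 1 = c + Pi.single (a + 1) 1 := by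
  refine ⟨c + Pi.single (a + 1) 1 - Pi.single a 1, tsub_add_cancel_of_le fun v => ?_⟩
  rcases eq_or_ne v a with rfl | hv
  · simpa using Nat.succ_le_of_lt ha
  · simp [hv]

lemma excess_of_add_single_eq {c' : ℕ → ℕ} {a : ℕ}
    (h : c' + Pi.single a 1 = c + Pi.single (a + 1) 1) (k : ℕ) :
    excess c' nu k = excess c nu k - if k = a + 1 then 1 else 0 := by
  have hk := excess_add_single_left c' nu a k
  rw [h, excess_add_single_left] at hk
  split_ifs at hk ⊢ <;> omega

lemma exists_unitTransfer (hnu : Antitone nu) (hN : ∀ k, N ≤ k → excess c nu k = 0) {p : ℕ}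
    (hp : 0 < excess c nu p) :
    ∃ c' m, UnitTransfer c c' ∧ 0 < excess c nu m ∧
      ∀ k, excess c' nu k = excess c nu k - if k = m then 1 else 0 := by
  obtain ⟨a, hmax⟩ := exists_isFirstMax_excess (fun k hk => (hN k hk).trans (hN N le_rfl).symm) hp
  have hlt : c (a + 1) < c a := calc
    c (a + 1) ≤ nu (a + 1) := hmax.le_of_excess
    _ ≤ nu a := hnu a.le_succ
    _ < c a := hmax.lt_of_excess
  obtain ⟨c', hc'⟩ := exists_add_single_eq (Nat.zero_lt_of_lt hlt)
  exact ⟨c', a + 1, ⟨a, hlt, hc'⟩, hp.trans_le (hmax.le p), excess_of_add_single_eq hc'⟩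

lemma reflTransGen_unitTransfer (hnu : Antitone nu) (hN : ∀ k, N ≤ k → excess c nu k = 0)
    (hmaj : ∀ k, 0 ≤ excess c nu k) : Relation.ReflTransGen UnitTransfer c nu := by
  induction hm : (∑ k ∈ range N, excess c nu k).toNat using Nat.strong_induction_on
    generalizing c with
  | _ m ih =>
    subst hm
    by_cases hp : ∃ p, 0 < excess c nu p
    · obtain ⟨p, hp⟩ := hp
      obtain ⟨c', m, hstep, hm, hexcess⟩ := exists_unitTransfer hnu hN hp
      have hmN : m < N := by
        by_contra! h
        exact hm.ne' (hN m h)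
      have hsum : ∑ k ∈ range N, excess c' nu k = ∑ k ∈ range N, excess c nu k - 1 := by
        simp only [hexcess, sum_sub_distrib, sum_ite_eq', mem_range, hmN, if_true]
      have hpos : 0 < ∑ k ∈ range N, excess c nu k :=
        sum_pos' (fun k _ => hmaj k) ⟨m, mem_range.2 hmN, hm⟩
      refine .head hstep (ih _ (by omega) (fun k hk => ?_) (fun k => ?_) rfl)
      · rw [hexcess, hN k hk, if_neg (by omega), sub_zero]
      · rw [hexcess]
        split_ifs with hk
        · subst hk; omega
        · simpa using hmaj k
    · rw [eq_of_excess_eq_zero fun k => le_antisymm (not_lt.1 (not_exists.1 hp k)) (hmaj k)]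

end Majorization

section Tableaux

variable {lam : YoungDiagram}

/-- The content of a tableau: the number of entries equal to each value. -/
def content (T : SemistandardYoungTableau lam) (v : ℕ) : ℕ :=
  #{x ∈ lam.cells | T x.1 x.2 = v}

/-- The number of entries equal to `v` in column `j`. -/
def columnCount (T : SemistandardYoungTableau lam) (v j : ℕ) : ℕ :=
  #{x ∈ lam.col j | T x.1 x.2 = v}

/-- The number of entries `a` minus the number of entries `a + 1` in the first `k` columns. -/
def height (T : SemistandardYoungTableau lam) (a k : ℕ) : ℤ :=
  excess (columnCount T a) (columnCount T (a + 1)) k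

lemma content_pos_iff {T : SemistandardYoungTableau lam} {v : ℕ} :
    0 < content T v ↔ ∃ x ∈ lam.cells, T x.1 x.2 = v := by
  rw [content, card_pos, filter_nonempty_iff]

lemma eq_of_entry_eq (T : SemistandardYoungTableau lam) {i i' j : ℕ} (hi : (i, j) ∈ lam)
    (hi' : (i', j) ∈ lam) (h : T i j = T i' j) : i = i' := by
  rcases lt_trichotomy i i' with hlt | heq | hgt
  · exact absurd h (T.col_strict hlt hi').ne
  · exact heq
  · exact absurd h (T.col_strict hgt hi).ne'

lemma columnCount_le_one (T : SemistandardYoungTableau lam) (v j : ℕ) :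
    columnCount T v j ≤ 1 := by
  refine card_le_one.2 ?_
  rintro ⟨i, k⟩ h ⟨i', k'⟩ h'
  simp only [mem_filter, YoungDiagram.mem_col_iff] at h h'
  obtain ⟨⟨hi, rfl⟩, hv⟩ := h
  obtain ⟨⟨hi', rfl⟩, hv'⟩ := h'
  rw [eq_of_entry_eq T hi hi' (hv.trans hv'.symm)]

lemma columnCount_pos_iff {T : SemistandardYoungTableau lam} {v j : ℕ} :
    0 < columnCount T v j ↔ ∃ i, (i, j) ∈ lam ∧ T i j = v := by
  simp [columnCount, card_pos, Finset.Nonempty, YoungDiagram.mem_col_iff, and_assoc]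

lemma snd_lt_rowLen_zero {x : ℕ × ℕ} (hx : x ∈ lam) : x.2 < lam.rowLen 0 :=
  (YoungDiagram.mem_iff_lt_rowLen.1 hx).trans_le (lam.rowLen_anti 0 x.1 x.1.zero_le)

lemma sum_columnCount (T : SemistandardYoungTableau lam) (v : ℕ) {k : ℕ}
    (hk : lam.rowLen 0 ≤ k) : ∑ j ∈ range k, columnCount T v j = content T v := by
  have hmaps : Set.MapsTo Prod.snd (SetLike.coe {x ∈ lam.cells | T x.1 x.2 = v}) (range k) := by
    intro x hx
    have hx : x ∈ lam := by simpa using (mem_filter.1 hx).1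
    simpa using (snd_lt_rowLen_zero hx).trans_le hk
  rw [content, card_eq_sum_card_fiberwise hmaps]
  exact sum_congr rfl fun j _ => by rw [columnCount, YoungDiagram.col, filter_comm]

lemma height_eq_content_sub (T : SemistandardYoungTableau lam) (a : ℕ) {k : ℕ}
    (hk : lam.rowLen 0 ≤ k) : height T a k = content T a - content T (a + 1) := by
  rw [height, excess, sum_columnCount T _ hk, sum_columnCount T _ hk]

/-- Adding `1` to the entry of `T` in the cell `(i, j)`, when its right and lower neighbours are
large enough for the result to be semistandard. -/
def incrementEntry (T : SemistandardYoungTableau lam) (i j : ℕ) (hmem : (i, j) ∈ lam)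
    (hright : (i, j + 1) ∈ lam → T i j < T i (j + 1))
    (hbelow : (i + 1, j) ∈ lam → T i j + 1 < T (i + 1) j) : SemistandardYoungTableau lam where
  entry i' j' := if i' = i ∧ j' = j then T i j + 1 else T i' j'
  row_weak' {i' j₁ j₂} hj hmem₂ := by
    have hle := T.row_weak hj hmem₂
    split_ifs with h₁ h₂ h₂
    · rfl
    · obtain ⟨rfl, rfl⟩ := h₁
      exact (hright (lam.up_left_mem le_rfl hj hmem₂)).trans_le (T.row_weak_of_le hj hmem₂)
    · obtain ⟨rfl, rfl⟩ := h₂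
      exact hle.trans (Nat.le_succ _)
    · exact hle
  col_strict' {i₁ i₂ j'} hi hmem₂ := by
    have hlt := T.col_strict hi hmem₂
    split_ifs with h₁ h₂ h₂
    · omega
    · obtain ⟨rfl, rfl⟩ := h₁
      exact (hbelow (lam.up_left_mem hi le_rfl hmem₂)).trans_le (T.col_weak hi hmem₂)
    · obtain ⟨rfl, rfl⟩ := h₂
      exact hlt.trans (Nat.lt_add_one _)
    · exact hlt
  zeros' {i' j'} h := by
    rw [if_neg (by rintro ⟨rfl, rfl⟩; exact h hmem), T.zeros h]

end Tableaux

section Lowering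

lemma card_filter_update_add_single {α β : Type*} [DecidableEq α] [DecidableEq β] {s : Finset α}
    {x : α} (hx : x ∈ s) (f : α → β) (b : β) :
    (fun v => #{y ∈ s | Function.update f x b y = v}) + Pi.single (f x) 1 =
      (fun v => #{y ∈ s | f y = v}) + Pi.single b 1 := by
  funext v
  have hsplit (h : α → β) :
      #{y ∈ s | h y = v} = (if h x = v then 1 else 0) + #{y ∈ s.erase x | h y = v} := by
    simp only [card_filter]
    exact (add_sum_erase s _ hx).symm
  have herase : {y ∈ s.erase x | Function.update f x b y = v} = {y ∈ s.erase x | f y = v} :=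
    filter_congr fun y hy => by rw [Function.update_of_ne (ne_of_mem_erase hy)]
  simp only [Pi.add_apply, Pi.single_apply, hsplit, Function.update_self, herase, eq_comm (a := v)]
  ring

variable {lam : YoungDiagram} {a : ℕ} {T T' : SemistandardYoungTableau lam} {x : ℕ × ℕ}

/-- `T'` is the image of `T` under the crystal lowering operator of index `a`, which turns the
entry `a` in the cell `x` into `a + 1`. -/
structure IsLowering (a : ℕ) (T T' : SemistandardYoungTableau lam) (x : ℕ × ℕ) : Prop where
  mem : x ∈ lam
  entry_eq : T x.1 x.2 = a
  uncurry_eq : Function.uncurry T' = Function.update (Function.uncurry T) x (a + 1)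
  isFirstMax : IsFirstMax (height T a) (x.2 + 1)

namespace IsLowering

lemma content_add_single (h : IsLowering a T T' x) :
    content T' + Pi.single a 1 = content T + Pi.single (a + 1) 1 := by
  have hx : x ∈ lam.cells := h.mem
  have := card_filter_update_add_single hx (Function.uncurry T) (a + 1)
  rwa [← h.uncurry_eq, show Function.uncurry T x = a from h.entry_eq] at this

lemma columnCount_add_single_snd (h : IsLowering a T T' x) :
    (columnCount T' · x.2) + Pi.single a 1 = (columnCount T · x.2) + Pi.single (a + 1) 1 := by
  have hx : x ∈ lam.col x.2 := YoungDiagram.mem_col_iff.2 ⟨h.mem, rfl⟩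
  have := card_filter_update_add_single hx (Function.uncurry T) (a + 1)
  rwa [← h.uncurry_eq, show Function.uncurry T x = a from h.entry_eq] at this

lemma columnCount_of_ne (h : IsLowering a T T' x) {j : ℕ} (hj : j ≠ x.2) (v : ℕ) :
    columnCount T' v j = columnCount T v j := by
  unfold columnCount
  congr 1
  refine filter_congr fun y hy => ?_
  have hyx : y ≠ x := by
    rintro rfl
    exact hj (YoungDiagram.mem_col_iff.1 hy).2.symm
  have := congrFun h.uncurry_eq y
  rw [Function.update_of_ne hyx] at this
  exact iff_of_eq (congrArg (· = v) this)

lemma columnCount_add_single (h : IsLowering a T T' x) :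
    columnCount T' a + Pi.single x.2 1 = columnCount T a := by
  funext j
  rcases eq_or_ne j x.2 with rfl | hj
  · simpa using congrFun h.columnCount_add_single_snd a
  · simp [hj, h.columnCount_of_ne hj]

lemma columnCount_succ (h : IsLowering a T T' x) :
    columnCount T' (a + 1) = columnCount T (a + 1) + Pi.single x.2 1 := by
  funext j
  rcases eq_or_ne j x.2 with rfl | hj
  · simpa using congrFun h.columnCount_add_single_snd (a + 1)
  · simp [hj, h.columnCount_of_ne hj]

lemma height_eq (h : IsLowering a T T' x) :
    height T' a = fun k => height T a k - if x.2 < k then 2 else 0 := by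
  funext k
  rw [height, height, h.columnCount_succ, excess_add_single_right, ← h.columnCount_add_single,
    excess_add_single_left]
  split_ifs <;> ring

lemma height_succ (h : IsLowering a T T' x) :
    height T a (x.2 + 1) = height T a x.2 + 1 := by
  have hlt := h.isFirstMax.lt_of_excess
  have hle := columnCount_le_one T a x.2
  rw [height, excess_succ, height]
  omega

lemma isLastMax (h : IsLowering a T T' x) : IsLastMax (height T' a) x.2 :=
  h.height_eq ▸ h.isFirstMax.isLastMax_sub_two h.height_succ

lemma entry_eq_succ (h : IsLowering a T T' x) : T' x.1 x.2 = a + 1 :=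
  (congrFun h.uncurry_eq x).trans (Function.update_self ..)

lemma uncurry_eq_update (h : IsLowering a T T' x) :
    Function.uncurry T = Function.update (Function.uncurry T') x a := by
  rw [h.uncurry_eq, Function.update_idem, ← h.entry_eq]
  exact (Function.update_eq_self x _).symm

lemma left_unique {T₁ T₂ : SemistandardYoungTableau lam} {x₁ x₂ : ℕ × ℕ}
    (h₁ : IsLowering a T₁ T' x₁) (h₂ : IsLowering a T₂ T' x₂) : T₁ = T₂ := by
  obtain ⟨i₁, j⟩ := x₁
  obtain ⟨i₂, j₂⟩ := x₂
  obtain rfl : j = j₂ := h₁.isLastMax.eq h₂.isLastMax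
  obtain rfl : i₁ = i₂ :=
    eq_of_entry_eq T' h₁.mem h₂.mem (h₁.entry_eq_succ.trans h₂.entry_eq_succ.symm)
  have huncurry : Function.uncurry T₁ = Function.uncurry T₂ :=
    h₁.uncurry_eq_update.trans h₂.uncurry_eq_update.symm
  exact SemistandardYoungTableau.ext fun i j => congrFun huncurry (i, j)

end IsLowering

lemma entry_ne_succ_of_isFirstMax {i j : ℕ} (hmax : IsFirstMax (height T a) (j + 1))
    (hij : (i, j) ∈ lam) : T i j ≠ a + 1 := by
  intro h
  have hpos : 0 < columnCount T (a + 1) j := columnCount_pos_iff.2 ⟨i, hij, h⟩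
  have hlt : columnCount T (a + 1) j < columnCount T a j := hmax.lt_of_excess
  have hle := columnCount_le_one T a j
  omega

lemma entry_lt_right_of_isFirstMax {i j : ℕ} (hmax : IsFirstMax (height T a) (j + 1))
    (h : T i j = a) (hright : (i, j + 1) ∈ lam) : T i j < T i (j + 1) := by
  refine (T.row_weak j.lt_add_one hright).lt_of_ne fun heq => ?_
  have hpos : 0 < columnCount T (a + 1) (j + 1) := calc
    0 < columnCount T a (j + 1) := columnCount_pos_iff.2 ⟨i, hright, heq.symm.trans h⟩
    _ ≤ columnCount T (a + 1) (j + 1) := hmax.le_of_excess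
  obtain ⟨i', hi', hsucc⟩ := columnCount_pos_iff.1 hpos
  have hii' : i < i' := by
    by_contra! hle
    have := T.col_weak hle hright
    omega
  have hleft : (i', j) ∈ lam := lam.up_left_mem le_rfl j.le_succ hi'
  have hlow : T i j < T i' j := T.col_strict hii' hleft
  have hhigh : T i' j ≤ T i' (j + 1) := T.row_weak j.lt_add_one hi'
  exact entry_ne_succ_of_isFirstMax hmax hleft (by omega)

lemma entry_succ_lt_below_of_isFirstMax {i j : ℕ} (hmax : IsFirstMax (height T a) (j + 1))
    (h : T i j = a) (hbelow : (i + 1, j) ∈ lam) : T i j + 1 < T (i + 1) j := by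
  have hlt := T.col_strict i.lt_add_one hbelow
  have hne := entry_ne_succ_of_isFirstMax hmax hbelow
  omega

lemma exists_isFirstMax_height (h : content T (a + 1) < content T a) :
    ∃ j, IsFirstMax (height T a) (j + 1) := by
  refine exists_isFirstMax_excess (N := lam.rowLen 0) (p := lam.rowLen 0) (fun k hk => ?_) ?_
  · exact (height_eq_content_sub T a hk).trans (height_eq_content_sub T a le_rfl).symm
  · exact (sub_pos.2 (Nat.cast_lt.2 h)).trans_eq (height_eq_content_sub T a le_rfl).symm

lemma exists_isLowering (h : content T (a + 1) < content T a) : ∃ T' x, IsLowering a T T' x := by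
  obtain ⟨j, hmax⟩ := exists_isFirstMax_height h
  obtain ⟨i, hij, rfl⟩ : ∃ i, (i, j) ∈ lam ∧ T i j = a :=
    columnCount_pos_iff.1 (Nat.zero_lt_of_lt hmax.lt_of_excess)
  refine ⟨incrementEntry T i j hij (entry_lt_right_of_isFirstMax hmax rfl)
    (entry_succ_lt_below_of_isFirstMax hmax rfl), (i, j), hij, rfl, ?_, hmax⟩
  funext y
  simp only [Function.update_apply, Prod.ext_iff]
  rfl

end Lowering

section KostkaNumbers

variable (lam : YoungDiagram) (mu : ℕ → ℕ)

lemma kostka_eq_card : kostka lam mu =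
    Nat.card {T : SemistandardYoungTableau lam // content T = mu} := by
  simp only [kostka, funext_iff, content]

instance : Finite {T : SemistandardYoungTableau lam // content T = mu} := by
  rcases isEmpty_or_nonempty {T : SemistandardYoungTableau lam // content T = mu} with h | ⟨T₀, rfl⟩
  · infer_instance
  have hmem (T : {T : SemistandardYoungTableau lam // content T = content T₀}) (x : lam.cells) :
      T.1 x.1.1 x.1.2 ∈ lam.cells.image (Function.uncurry T₀) := by
    have hpos : 0 < content T.1 (T.1 x.1.1 x.1.2) := content_pos_iff.2 ⟨x, x.2, rfl⟩
    rw [T.2, content_pos_iff] at hpos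
    exact mem_image.2 hpos
  refine Finite.of_injective (fun T x => (⟨_, hmem T x⟩ : lam.cells.image (Function.uncurry T₀)))
    fun T₁ T₂ heq => Subtype.ext (SemistandardYoungTableau.ext fun i j => ?_)
  by_cases hij : (i, j) ∈ lam
  · exact congrArg Subtype.val (congrFun heq ⟨(i, j), hij⟩)
  · rw [T₁.1.zeros hij, T₂.1.zeros hij]

variable {lam}

lemma kostka_le_of_unitTransfer {c c' : ℕ → ℕ} (h : UnitTransfer c c') :
    kostka lam c ≤ kostka lam c' := by
  obtain ⟨a, ha, hcc'⟩ := h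
  have hexists (T : {T : SemistandardYoungTableau lam // content T = c}) :
      ∃ T' : {T' : SemistandardYoungTableau lam // content T' = c'},
        ∃ x, IsLowering a T.1 T'.1 x := by
    obtain ⟨T, rfl⟩ := T
    obtain ⟨T', x, hT'⟩ := exists_isLowering ha
    exact ⟨⟨T', add_right_cancel (hT'.content_add_single.trans hcc'.symm)⟩, x, hT'⟩
  choose lower x hlower using hexists
  rw [kostka_eq_card, kostka_eq_card]
  refine Nat.card_le_card_of_injective lower fun T₁ T₂ heq => Subtype.ext ?_
  exact (hlower T₁).left_unique (heq ▸ hlower T₂)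

lemma kostka_le_of_reflTransGen {c c' : ℕ → ℕ} (h : Relation.ReflTransGen UnitTransfer c c') :
    kostka lam c ≤ kostka lam c' := by
  induction h with
  | refl => rfl
  | tail _ hstep ih => exact ih.trans (kostka_le_of_unitTransfer hstep)

end KostkaNumbers

end Kostka

theorem kostka_monotone_general {lam : YoungDiagram} {mu nu : ℕ → ℕ} (hnu : Antitone nu)
    (hmaj : ∀ k, ∑ i ∈ Finset.range k, nu i ≤ ∑ i ∈ Finset.range k, mu i)
    (hsum : ∀ᶠ k in Filter.atTop, ∑ i ∈ Finset.range k, mu i = ∑ i ∈ Finset.range k, nu i) :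
    kostka lam mu ≤ kostka lam nu := by
  obtain ⟨N, hN⟩ := Filter.eventually_atTop.1 hsum
  exact Kostka.kostka_le_of_reflTransGen <| Kostka.reflTransGen_unitTransfer hnu
    (fun k hk => Kostka.excess_eq_zero_iff.2 (hN k hk)) fun k => Kostka.excess_nonneg_iff.2 (hmaj k)

/-- White's monotonicity: for partitions `λ, μ, ν ⊢ n`, if `μ` majorizes `ν`
then `K_{λμ} ≤ K_{λν}`. Partitions `μ, ν` are encoded as weakly decreasing
functions `ℕ → ℕ` supported on `{0, …, n-1}` with total sum `n`. -/
theorem kostka_monotone (n : ℕ) (lam : YoungDiagram) (hlam : lam.card = n)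
    (mu nu : ℕ → ℕ)
    (hmu_dec : ∀ i, mu (i + 1) ≤ mu i) (hnu_dec : ∀ i, nu (i + 1) ≤ nu i)
    (hmu_supp : ∀ i, n ≤ i → mu i = 0) (hnu_supp : ∀ i, n ≤ i → nu i = 0)
    (hmu_sum : ∑ i ∈ Finset.range n, mu i = n)
    (hnu_sum : ∑ i ∈ Finset.range n, nu i = n)
    (hmaj : ∀ k, ∑ i ∈ Finset.range k, nu i ≤ ∑ i ∈ Finset.range k, mu i) :
    kostka lam mu ≤ kostka lam nu := by
  exact kostka_monotone_general (antitone_nat_of_succ_le hnu_dec) hmaj <|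
    Filter.eventually_atTop.2 ⟨n, fun k hk => by
      rw [Finset.eventually_constant_sum hmu_supp hk, Finset.eventually_constant_sum hnu_supp hk,
        hmu_sum, hnu_sum]⟩
end
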